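/- arXiv:1903.02952 — 3 statements merged into one kernel-verified Lean document; each statement's English description precedes it below -/
import Mathlib

section
/- Let R = ℂ[∂]V be a Leibniz conformal algebra, Q = ℂ[∂]x a free ℂ[∂]-module of rank 1, and E = R ⊕ Q as ℂ[∂]-modules. Then CExtd(E,R) ≅ (F₁(R)/≡₁) ∪ (F₂(R)/≡₂), where ≡₁ on F₁(R) is: (h, D, T, Q₀, P) ≡₁ (h', D', T', Q₀', P') iff h = h' and there exist u₀ ∈ R and β ∈ ℂ∖{0} with D_λ(a) = [a_λ u₀] + βD'_λ(a) − h_λ(a,∂)u₀, T_λ(a) = [u₀ _λ a] + βT'_λ(a), P(λ,∂) = h'_λ(u₀,∂) + βP'(λ,∂), Q₀(λ,∂) = [u₀ _λ u₀] + βD'_λ(u₀) + βT'_λ(u₀) + β²Q₀'(λ,∂) − P(λ,∂)u₀, for all a ∈ R; and ≡₂ on F₂(R) is the same except T_λ(a) = [u₀ _λ a] + βT'_λ(a) + h_{−λ−∂}(a,∂)u₀ and P(λ,∂) = h'_λ(u₀,∂) − h'_{−λ−∂}(u₀,∂) + βP'(λ,∂). Similarly CExtd'(E,R) ≅ (F₁(R)/≈₁)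 ∪ (F₂(R)/≈₂), where ≈ᵢ is ≡ᵢ with β = 1. The bijections send the class of (h, D, T, Q₀, P) ∈ F₁(R) to the class of the Leibniz conformal algebra FC₁ and the class of (h, D, T, Q₀, P) ∈ F₂(R) to the class of FC₂. -/
noncomputable section

/-- `g : ℂ → R` is (the evaluation of) a polynomial in `λ` with coefficients in `R`,
i.e. an element of `R[λ]`. -/
def IsPolyFun {R : Type*} [AddCommGroup R] [Module ℂ R] (g : ℂ → R) : Prop :=
  ∃ (N : ℕ) (c : ℕ → R), ∀ l : ℂ, g l = ∑ i ∈ Finset.range N, l ^ i • c i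

/-- A conformal bilinear map `U × V → W[λ]`, in evaluated form: `f_λ(∂u, v) = -λ f_λ(u,v)`
and `f_λ(u, ∂v) = (∂ + λ) f_λ(u,v)`. -/
structure IsConformalBilin {U V W : Type*}
    [AddCommGroup U] [Module ℂ U] [AddCommGroup V] [Module ℂ V]
    [AddCommGroup W] [Module ℂ W]
    (DU : Module.End ℂ U) (DV : Module.End ℂ V) (DW : Module.End ℂ W)
    (f : ℂ → U → V → W) : Prop where
  add_left : ∀ (l : ℂ) (a a' : U) (b : V), f l (a + a') b = f l a b + f l a' b
  smul_left : ∀ (l c : ℂ) (a : U) (b : V), f l (c • a) b = c • f l a b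
  add_right : ∀ (l : ℂ) (a : U) (b b' : V), f l a (b + b') = f l a b + f l a b'
  smul_right : ∀ (l c : ℂ) (a : U) (b : V), f l a (c • b) = c • f l a b
  poly : ∀ (a : U) (b : V), IsPolyFun (fun l => f l a b)
  conf_left : ∀ (l : ℂ) (a : U) (b : V), f l (DU a) b = (-l) • f l a b
  conf_right : ∀ (l : ℂ) (a : U) (b : V), f l a (DV b) = DW (f l a b) + l • f l a b

/-- A Leibniz conformal algebra structure on the `ℂ[∂]`-module `(R, D)`:
a conformal bilinear `λ`-bracket satisfying the Jacobi identity. -/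
structure IsLeibnizConformal {R : Type*} [AddCommGroup R] [Module ℂ R]
    (D : Module.End ℂ R) (br : ℂ → R → R → R) : Prop where
  bilin : IsConformalBilin D D D br
  jacobi : ∀ (l m : ℂ) (a b c : R),
    br l a (br m b c) = br (l + m) (br l a b) c + br m b (br l a c)

/-- An extending datum `Ω(R,Q) = (↼, ⇀, ◁, ▷, f, {·_λ·})` of a Leibniz conformal algebra
`R` by a `ℂ[∂]`-module `Q`: six conformal bilinear maps.  Here `lh = ↼`, `rh = ⇀`,
`lt = ◁`, `rt = ▷`, `fm = f`, `bq = {·_λ·}`. -/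
structure IsExtendingDatum {R Q : Type*}
    [AddCommGroup R] [Module ℂ R] [AddCommGroup Q] [Module ℂ Q]
    (DR : Module.End ℂ R) (DQ : Module.End ℂ Q)
    (lh : ℂ → R → Q → R) (rh : ℂ → R → Q → Q)
    (lt : ℂ → Q → R → Q) (rt : ℂ → Q → R → R)
    (fm : ℂ → Q → Q → R) (bq : ℂ → Q → Q → Q) : Prop where
  lh_bilin : IsConformalBilin DR DQ DR lh
  rh_bilin : IsConformalBilin DR DQ DQ rh
  lt_bilin : IsConformalBilin DQ DR DQ lt
  rt_bilin : IsConformalBilin DQ DR DR rt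
  fm_bilin : IsConformalBilin DQ DQ DR fm
  bq_bilin : IsConformalBilin DQ DQ DQ bq

/-- The unified product bracket on `R × Q`:
`[(a,x)_λ (b,y)] = ([a_λ b] + a↼_λ y + x▷_λ b + f_λ(x,y), a⇀_λ y + x◁_λ b + {x_λ y})`. -/
def unifiedBracket {R Q : Type*}
    [AddCommGroup R] [Module ℂ R] [AddCommGroup Q] [Module ℂ Q]
    (br : ℂ → R → R → R)
    (lh : ℂ → R → Q → R) (rh : ℂ → R → Q → Q)
    (lt : ℂ → Q → R → Q) (rt : ℂ → Q → R → R)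
    (fm : ℂ → Q → Q → R) (bq : ℂ → Q → Q → Q) :
    ℂ → R × Q → R × Q → R × Q :=
  fun l p q =>
    (br l p.1 q.1 + lh l p.1 q.2 + rt l p.2 q.1 + fm l p.2 q.2,
     rh l p.1 q.2 + lt l p.2 q.1 + bq l p.2 q.2)

/-- `φ` commutes with the `ℂ[∂]`-module structure, i.e. is a `ℂ[∂]`-module map. -/
def PreservesD {E : Type*} [AddCommGroup E] [Module ℂ E]
    (D : Module.End ℂ E) (φ : E →ₗ[ℂ] E) : Prop :=
  ∀ u : E, φ (D u) = D (φ u)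

/-- `φ` intertwines the two `λ`-brackets. -/
def IsBracketHom {E : Type*} [AddCommGroup E] [Module ℂ E]
    (br br' : ℂ → E → E → E) (φ : E →ₗ[ℂ] E) : Prop :=
  ∀ (l : ℂ) (u v : E), φ (br l u v) = br' l (φ u) (φ v)

/-- `φ : R ⊕ Q → R ⊕ Q` stabilizes `R`. -/
def StabilizesFst {R Q : Type*} [AddCommGroup R] [Module ℂ R] [AddCommGroup Q] [Module ℂ Q]
    (φ : R × Q →ₗ[ℂ] R × Q) : Prop :=
  ∀ a : R, φ (a, 0) = (a, 0)

/-- `φ : R ⊕ Q → R ⊕ Q` co-stabilizes `Q`. -/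
def CoStabilizesSnd {R Q : Type*} [AddCommGroup R] [Module ℂ R] [AddCommGroup Q] [Module ℂ Q]
    (φ : R × Q →ₗ[ℂ] R × Q) : Prop :=
  ∀ p : R × Q, (φ p).2 = p.2

/-- A Leibniz conformal algebra structure on `E = R ⊕ Q` containing `R`
as a subalgebra (an element of the set underlying `CExtd(E,R)`). -/
structure LCAOn (R Q : Type*)
    [AddCommGroup R] [Module ℂ R] [AddCommGroup Q] [Module ℂ Q]
    (DR : Module.End ℂ R) (DQ : Module.End ℂ Q) (br : ℂ → R → R → R) where
  brE : ℂ → R × Q → R × Q → R × Q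
  leib : IsLeibnizConformal (LinearMap.prodMap DR DQ) brE
  sub : ∀ (l : ℂ) (a b : R), brE l (a, 0) (b, 0) = (br l a b, 0)

/-- The relation `≡` on Leibniz conformal algebra structures on `E = R ⊕ Q` containing `R`
as a subalgebra: isomorphism stabilizing `R`. -/
def lcaEquiv {R Q : Type*}
    [AddCommGroup R] [Module ℂ R] [AddCommGroup Q] [Module ℂ Q]
    (DR : Module.End ℂ R) (DQ : Module.End ℂ Q) (br : ℂ → R → R → R)
    (A B : LCAOn R Q DR DQ br) : Prop :=
  ∃ φ : R × Q →ₗ[ℂ] R × Q, Function.Bijective φ ∧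
    PreservesD (LinearMap.prodMap DR DQ) φ ∧ IsBracketHom A.brE B.brE φ ∧
    StabilizesFst φ

/-- The relation `≈` on Leibniz conformal algebra structures on `E = R ⊕ Q` containing `R`
as a subalgebra: isomorphism stabilizing `R` and co-stabilizing `Q`. -/
def lcaCohom {R Q : Type*}
    [AddCommGroup R] [Module ℂ R] [AddCommGroup Q] [Module ℂ Q]
    (DR : Module.End ℂ R) (DQ : Module.End ℂ Q) (br : ℂ → R → R → R)
    (A B : LCAOn R Q DR DQ br) : Prop :=
  ∃ φ : R × Q →ₗ[ℂ] R × Q, Function.Bijective φ ∧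
    PreservesD (LinearMap.prodMap DR DQ) φ ∧ IsBracketHom A.brE B.brE φ ∧
    StabilizesFst φ ∧ CoStabilizesSnd φ

open Polynomial in
/-- The polynomial ring `ℂ[λ, ∂]`, realized as `(ℂ[∂])[λ]`: the *outer* variable is `λ`
and the *inner* variable is `∂`. -/
abbrev CPoly2 : Type := Polynomial (Polynomial ℂ)

open Polynomial in
/-- Substitute `λ := lam` and `∂ := del` (simultaneously) in `p ∈ ℂ[λ,∂]`; the result is a
polynomial in the remaining formal variable. -/
noncomputable def sub2 (p : CPoly2) (lam del : Polynomial ℂ) : Polynomial ℂ :=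
  Polynomial.eval₂ (Polynomial.aeval del).toRingHom lam p

open Polynomial in
/-- Evaluate `p ∈ ℂ[λ,∂]` at `λ := lam`, `∂ := del` with `lam del : ℂ`. -/
noncomputable def ev2 (p : CPoly2) (lam del : ℂ) : ℂ :=
  (p.eval (Polynomial.C lam)).eval del

open Polynomial in
/-- Substitute `λ := -λ - ∂` in `p ∈ ℂ[λ,∂]` (a formal substitution inside `ℂ[λ,∂]`). -/
noncomputable def twistL (p : CPoly2) : CPoly2 :=
  Polynomial.eval₂ (Polynomial.C : Polynomial ℂ →+* CPoly2)
    (-(Polynomial.X : CPoly2) - Polynomial.C Polynomial.X) p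

/-- `IsNegShift D g g'` encodes, for polynomial functions `ℂ → R`, the formal identity
`g'(λ) = g(-λ-∂)`: there are coefficients `c i` of `g` such that
`g' l = ∑ (-l - ∂)^i (c i)`, where `∂` acts via `D`. -/
def IsNegShift {R : Type*} [AddCommGroup R] [Module ℂ R] (D : Module.End ℂ R)
    (g g' : ℂ → R) : Prop :=
  ∃ (N : ℕ) (c : ℕ → R),
    (∀ l : ℂ, g l = ∑ i ∈ Finset.range N, l ^ i • c i) ∧
    (∀ l : ℂ, g' l = ∑ i ∈ Finset.range N,
      ((((-l) • (1 : Module.End ℂ R) - D)) ^ i) (c i))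

open Polynomial

/-- The data of a 5-tuple `(h_λ(·,∂), D_λ, T_λ, Q₀(λ,∂), P(λ,∂))` on `R`: `h` is a left
conformal linear map `R → ℂ[λ,∂]`, `Dm` a left conformal linear map, `Tm` a conformal
linear map, `Q₀ ∈ R[λ]` and `P ∈ ℂ[λ,∂]`. -/
structure FlagData (R : Type*) [AddCommGroup R] [Module ℂ R]
    (DR : Module.End ℂ R) where
  h : R →ₗ[ℂ] CPoly2
  Dm : ℂ → R → R
  Tm : ℂ → R → R
  Q0 : ℂ → R
  P : CPoly2
  h_conf : ∀ a : R, h (DR a) = -(Polynomial.X : CPoly2) * h a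
  Dm_lin : ∀ l : ℂ, IsLinearMap ℂ (Dm l)
  Dm_poly : ∀ a : R, IsPolyFun (fun l => Dm l a)
  Dm_conf : ∀ (l : ℂ) (a : R), Dm l (DR a) = (-l) • Dm l a
  Tm_lin : ∀ l : ℂ, IsLinearMap ℂ (Tm l)
  Tm_poly : ∀ a : R, IsPolyFun (fun l => Tm l a)
  Tm_conf : ∀ (l : ℂ) (a : R), Tm l (DR a) = DR (Tm l a) + l • Tm l a
  Q0_poly : IsPolyFun Q0

/-- `F` is a flag datum of the first kind of `R`: conditions (2.14)–(2.24)
(`(F1)`–`(F11)`) of the paper. -/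
def IsFlag1 {R : Type*} [AddCommGroup R] [Module ℂ R] (DR : Module.End ℂ R)
    (br : ℂ → R → R → R) (F : FlagData R DR) : Prop :=
  -- (F1)
  (∀ (l m : ℂ) (a b : R),
    sub2 (F.h (br l a b)) (C (l + m)) X
      = sub2 (F.h b) (C m) (C l + X) * sub2 (F.h a) (C l) X
        - sub2 (F.h a) (C l) (C m + X) * sub2 (F.h b) (C m) X) ∧
  -- (F2)
  (∀ (l m : ℂ) (a b : R),
    F.Dm (l + m) (br l a b)
      = br l a (F.Dm m b) + aeval DR (sub2 (F.h b) (C m) (C l + X)) (F.Dm l a)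
        - br m b (F.Dm l a) - aeval DR (sub2 (F.h a) (C l) (C m + X)) (F.Dm m b)) ∧
  -- (F3)
  (∀ (l m : ℂ) (a b : R),
    F.Tm m (br l a b)
      = br l a (F.Tm m b) - br (l + m) (F.Dm l a) b
        - ev2 (F.h a) l (-l - m) • F.Tm (l + m) b) ∧
  -- (F4)
  (∀ (l m : ℂ) (a b : R),
    F.Tm m (br l a b) = br l a (F.Tm m b) + br (l + m) (F.Tm m a) b) ∧
  -- (F5)
  (∀ (l m : ℂ) (a : R),
    sub2 F.P (C m) (C l + X) * sub2 (F.h a) (C l) X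
      = ev2 (F.h a) l (-l - m) • sub2 F.P (C (l + m)) X
        + sub2 (F.h a) (C l) (C m + X) * sub2 F.P (C m) X
        + sub2 (F.h (F.Dm l a)) (C (l + m)) X) ∧
  -- (F6)
  (∀ (l m : ℂ) (a : R),
    aeval DR (sub2 F.P (C m) (C l + X)) (F.Dm l a)
      = F.Dm (l + m) (F.Dm l a) + ev2 (F.h a) l (-l - m) • F.Q0 (l + m)
        + F.Tm m (F.Dm l a) + aeval DR (sub2 (F.h a) (C l) (C m + X)) (F.Q0 m)
        - br l a (F.Q0 m)) ∧
  -- (F7)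
  (∀ (l m : ℂ) (a : R),
    F.Dm (l + m) (F.Tm m a) + F.Dm (l + m) (F.Dm l a)
      + ev2 (F.h a) l (-l - m) • F.Q0 (l + m) = 0) ∧
  -- (F8)
  (∀ (l m : ℂ) (a : R),
    ev2 (F.h a) l (-l - m) • sub2 F.P (C (l + m)) X
      + sub2 (F.h (F.Dm l a)) (C (l + m)) X
      + sub2 (F.h (F.Tm m a)) (C (l + m)) X = 0) ∧
  -- (F9)
  (∀ (l m : ℂ) (a : R),
    ev2 F.P l (-l - m) • F.Tm (l + m) a
      = F.Tm l (F.Tm m a) - br (l + m) (F.Q0 l) a - F.Tm m (F.Tm l a)) ∧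
  -- (F10)
  (∀ l m : ℂ,
    F.Tm l (F.Q0 m)
      = F.Dm (l + m) (F.Q0 l) + ev2 F.P l (-l - m) • F.Q0 (l + m) + F.Tm m (F.Q0 l)
        + aeval DR (sub2 F.P (C l) (C m + X)) (F.Q0 m)
        - aeval DR (sub2 F.P (C m) (C l + X)) (F.Q0 l)) ∧
  -- (F11)
  (∀ l m : ℂ,
    sub2 (F.h (F.Q0 l)) (C (l + m)) X
      + ev2 F.P l (-l - m) • sub2 F.P (C (l + m)) X
      + sub2 F.P (C l) (C m + X) * sub2 F.P (C m) X
      - sub2 F.P (C m) (C l + X) * sub2 F.P (C l) X = 0)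

/-- `F` is a flag datum of the second kind of `R`: `h` non-trivial, conditions (F1),
(F2), (F6), (F10) together with (2.25)–(2.33) (`(G1)`–`(G8)`) of the paper. -/
def IsFlag2 {R : Type*} [AddCommGroup R] [Module ℂ R] (DR : Module.End ℂ R)
    (br : ℂ → R → R → R) (F : FlagData R DR) : Prop :=
  -- `h` is a non-trivial map
  F.h ≠ 0 ∧
  -- (F1)
  (∀ (l m : ℂ) (a b : R),
    sub2 (F.h (br l a b)) (C (l + m)) X
      = sub2 (F.h b) (C m) (C l + X) * sub2 (F.h a) (C l) X
        - sub2 (F.h a) (C l) (C m + X) * sub2 (F.h b) (C m) X) ∧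
  -- (F2)
  (∀ (l m : ℂ) (a b : R),
    F.Dm (l + m) (br l a b)
      = br l a (F.Dm m b) + aeval DR (sub2 (F.h b) (C m) (C l + X)) (F.Dm l a)
        - br m b (F.Dm l a) - aeval DR (sub2 (F.h a) (C l) (C m + X)) (F.Dm m b)) ∧
  -- (F6)
  (∀ (l m : ℂ) (a : R),
    aeval DR (sub2 F.P (C m) (C l + X)) (F.Dm l a)
      = F.Dm (l + m) (F.Dm l a) + ev2 (F.h a) l (-l - m) • F.Q0 (l + m)
        + F.Tm m (F.Dm l a) + aeval DR (sub2 (F.h a) (C l) (C m + X)) (F.Q0 m)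
        - br l a (F.Q0 m)) ∧
  -- (F10)
  (∀ l m : ℂ,
    F.Tm l (F.Q0 m)
      = F.Dm (l + m) (F.Q0 l) + ev2 F.P l (-l - m) • F.Q0 (l + m) + F.Tm m (F.Q0 l)
        + aeval DR (sub2 F.P (C l) (C m + X)) (F.Q0 m)
        - aeval DR (sub2 F.P (C m) (C l + X)) (F.Q0 l)) ∧
  -- (G1)
  (∀ (l m : ℂ) (a b : R),
    F.Tm m (br l a b)
      = br l a (F.Tm m b)
        - aeval DR (sub2 (F.h b) (-(C l) - C m - X) (C l + X)) (F.Dm l a)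
        - br (l + m) (F.Dm l a) b - ev2 (F.h a) l (-l - m) • F.Tm (l + m) b) ∧
  -- (G2)
  (∀ (l m : ℂ) (a b : R),
    br (l + m) (F.Tm m a) b + br (l + m) (F.Dm l a) b = 0) ∧
  -- (G3)
  (∀ (l m : ℂ) (a : R),
    sub2 F.P (C m) (C l + X) * sub2 (F.h a) (C l) X
      = ev2 (F.h a) l (-l - m) • sub2 F.P (C (l + m)) X
        - sub2 (F.h (F.Dm l a)) (-(C m) - X) X
        + sub2 (F.h a) (C l) (C m + X) * sub2 F.P (C m) X
        + sub2 (F.h (F.Dm l a)) (C (l + m)) X) ∧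
  -- (G4)
  (∀ (l m : ℂ) (a : R),
    F.Dm (l + m) (F.Tm m a) + F.Dm (l + m) (F.Dm l a) = 0) ∧
  -- (G5)
  (∀ (l m : ℂ) (a : R),
    sub2 (F.h (F.Dm l a)) (C (l + m)) X + sub2 (F.h (F.Tm m a)) (C (l + m)) X = 0) ∧
  -- (G6)
  (∀ (l m : ℂ) (a : R),
    ev2 F.P l (-l - m) • F.Tm (l + m) a
      = F.Tm l (F.Tm m a)
        - aeval DR (sub2 (F.h a) (-(C l) - C m - X) (C l + X)) (F.Q0 l)
        - br (l + m) (F.Q0 l) a - F.Tm m (F.Tm l a)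
        + aeval DR (sub2 (F.h a) (-(C l) - C m - X) (C m + X)) (F.Q0 m)) ∧
  -- (G7)
  (∀ (l m : ℂ) (a : R),
    ev2 F.P l (-l - m) • sub2 (F.h a) (-(C l) - C m - X) X
      = sub2 (F.h (F.Tm m a)) (-(C l) - X) X
        + sub2 (F.h a) (-(C l) - C m - X) (C l + X) * sub2 F.P (C l) X
        - sub2 (F.h (F.Tm l a)) (-(C m) - X) X
        - sub2 (F.h a) (-(C l) - C m - X) (C m + X) * sub2 F.P (C m) X) ∧
  -- (G8)
  (∀ l m : ℂ,
    -sub2 (F.h (F.Q0 m)) (-(C l) - X) X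
      = sub2 (F.h (F.Q0 l)) (C (l + m)) X - sub2 (F.h (F.Q0 l)) (-(C m) - X) X
        + ev2 F.P l (-l - m) • sub2 F.P (C (l + m)) X
        + sub2 F.P (C l) (C m + X) * sub2 F.P (C m) X
        - sub2 F.P (C m) (C l + X) * sub2 F.P (C l) X)

/-- The flag datum `(h,D,T,Q₀,P)` is obtained from `(h',D',T',Q₀',P')` via `(u₀, β)`,
first-kind version (the relation `≡₁`, resp. `≈₁` when `β = 1`). -/
def FlagRel1Via {R : Type*} [AddCommGroup R] [Module ℂ R] (DR : Module.End ℂ R)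
    (br : ℂ → R → R → R) (F F' : FlagData R DR) (u₀ : R) (β : ℂ) : Prop :=
  F.h = F'.h ∧
  (∀ (l : ℂ) (a : R),
    F.Dm l a = br l a u₀ + β • F'.Dm l a
      - Polynomial.aeval DR (sub2 (F.h a) (C l) X) u₀) ∧
  (∀ (l : ℂ) (a : R), F.Tm l a = br l u₀ a + β • F'.Tm l a) ∧
  (F.P = F'.h u₀ + β • F'.P) ∧
  (∀ l : ℂ, F.Q0 l
    = br l u₀ u₀ + β • F'.Dm l u₀ + β • F'.Tm l u₀ + β ^ 2 • F'.Q0 l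
      - Polynomial.aeval DR (sub2 F.P (C l) X) u₀)

/-- The flag datum `(h,D,T,Q₀,P)` is obtained from `(h',D',T',Q₀',P')` via `(u₀, β)`,
second-kind version (the relation `≡₂`, resp. `≈₂` when `β = 1`). -/
def FlagRel2Via {R : Type*} [AddCommGroup R] [Module ℂ R] (DR : Module.End ℂ R)
    (br : ℂ → R → R → R) (F F' : FlagData R DR) (u₀ : R) (β : ℂ) : Prop :=
  F.h = F'.h ∧
  (∀ (l : ℂ) (a : R),
    F.Dm l a = br l a u₀ + β • F'.Dm l a
      - Polynomial.aeval DR (sub2 (F.h a) (C l) X) u₀) ∧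
  (∀ (l : ℂ) (a : R),
    F.Tm l a = br l u₀ a + β • F'.Tm l a
      + Polynomial.aeval DR (sub2 (F.h a) (-(C l) - X) X) u₀) ∧
  (F.P = F'.h u₀ - twistL (F'.h u₀) + β • F'.P) ∧
  (∀ l : ℂ, F.Q0 l
    = br l u₀ u₀ + β • F'.Dm l u₀ + β • F'.Tm l u₀ + β ^ 2 • F'.Q0 l
      - Polynomial.aeval DR (sub2 F.P (C l) X) u₀)

/-- `A` is the Leibniz conformal algebra
`FC₁(R, ℂ[∂]x | h, D, T, Q₀, P)` associated with a flag datum of the first kind. -/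
def IsFC1Of {R Q : Type*} [AddCommGroup R] [Module ℂ R] [AddCommGroup Q] [Module ℂ Q]
    (DR : Module.End ℂ R) (DQ : Module.End ℂ Q) (br : ℂ → R → R → R) (x : Q)
    (F : FlagData R DR) (A : LCAOn R Q DR DQ br) : Prop :=
  (∀ (l : ℂ) (a : R),
    A.brE l (a, 0) (0, x) = (F.Dm l a, Polynomial.aeval DQ (sub2 (F.h a) (C l) X) x)) ∧
  (∀ (l : ℂ) (a : R), A.brE l (0, x) (a, 0) = (F.Tm l a, 0)) ∧
  (∀ l : ℂ,
    A.brE l (0, x) (0, x) = (F.Q0 l, Polynomial.aeval DQ (sub2 F.P (C l) X) x))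

/-- `A` is the Leibniz conformal algebra
`FC₂(R, ℂ[∂]x | h, D, T, Q₀, P)` associated with a flag datum of the second kind. -/
def IsFC2Of {R Q : Type*} [AddCommGroup R] [Module ℂ R] [AddCommGroup Q] [Module ℂ Q]
    (DR : Module.End ℂ R) (DQ : Module.End ℂ Q) (br : ℂ → R → R → R) (x : Q)
    (F : FlagData R DR) (A : LCAOn R Q DR DQ br) : Prop :=
  (∀ (l : ℂ) (a : R),
    A.brE l (a, 0) (0, x) = (F.Dm l a, Polynomial.aeval DQ (sub2 (F.h a) (C l) X) x)) ∧
  (∀ (l : ℂ) (a : R),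
    A.brE l (0, x) (a, 0)
      = (F.Tm l a, -(Polynomial.aeval DQ (sub2 (F.h a) (-(C l) - X) X) x))) ∧
  (∀ l : ℂ,
    A.brE l (0, x) (0, x) = (F.Q0 l, Polynomial.aeval DQ (sub2 F.P (C l) X) x))

/-!
A bracket on `R ⊕ ℂ[∂]x` extending the one of `R` is determined by sesquilinearity from its values
at `R ∪ {x}`, that is, from a 5-tuple `(h, D, T, Q₀, P)` together with the `Q`-part `g_λ(a, ∂)x` of
`[x_λ a]`, and the Jacobi identity need only be checked at triples from `R ∪ {x}`.  Adding the
identities at `(a, x, b)` and `(x, a, b)` gives `[([a_λ x] + [x_μ a])_{λ+μ} b] = 0`, whose `Q`-part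
is a product of polynomials; hence `g = 0` or `g = -h_{-λ-∂}`, the two kinds of flag data.  Since
the units of `ℂ[∂]` are the nonzero scalars, the isomorphisms that fix `R` are the maps
`(a, p x) ↦ (a + p u, β p x)` with `β ≠ 0`; comparing the brackets at `R ∪ {x}` gives the relations
`≡ᵢ`, and `≈ᵢ` when `β = 1`.
-/

/-! ### Substitution in `ℂ[λ, ∂]` -/

section Substitution

variable (p q : CPoly2) (a b : ℂ[X])

@[simp] theorem sub2_zero : sub2 0 a b = 0 := eval₂_zero _ _

@[simp] theorem sub2_X : sub2 X a b = a := eval₂_X _ _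

@[simp] theorem sub2_C (r : ℂ[X]) : sub2 (C r) a b = r.comp b := eval₂_C _ _

@[simp] theorem sub2_add : sub2 (p + q) a b = sub2 p a b + sub2 q a b := eval₂_add _ _

@[simp] theorem sub2_neg : sub2 (-p) a b = -sub2 p a b := eval₂_neg _

@[simp] theorem sub2_mul : sub2 (p * q) a b = sub2 p a b * sub2 q a b := eval₂_mul _ _

@[simp] theorem sub2_smul (c : ℂ) : sub2 (c • p) a b = c • sub2 p a b := by
  have smul_eq : c • p = C (C c) * p := by ext; simp
  rw [smul_eq, sub2_mul, sub2_C, C_comp, smul_eq_C_mul]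

theorem sub2_twistL : sub2 (twistL p) a b = sub2 p (-a - b) b := by
  have comp_C : (eval₂RingHom (aeval b).toRingHom a).comp (C : ℂ[X] →+* CPoly2)
      = (aeval (R := ℂ) b).toRingHom := by ext <;> simp
  have map_arg : eval₂RingHom (aeval b).toRingHom a (-X - C (X : ℂ[X])) = -a - b := by
    simp only [map_sub, map_neg, coe_eval₂RingHom, eval₂_X, eval₂_C]
    simp
  have map_twistL := hom_eval₂ p C (eval₂RingHom (aeval b).toRingHom a) (-X - C X)
  rwa [comp_C, map_arg] at map_twistL

theorem eval_sub2 (d : ℂ) : (sub2 p a b).eval d = ev2 p (a.eval d) (b.eval d) := by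
  have comp_aeval : (evalRingHom d).comp (aeval (R := ℂ) b).toRingHom
      = evalRingHom (b.eval d) := by ext <;> simp
  have eval_left := hom_eval₂ p (aeval b).toRingHom (evalRingHom d) a
  rw [comp_aeval] at eval_left
  exact eval_left.trans (eval₂_evalRingHom (b.eval d) ▸ rfl)

theorem sub2_comp (r : ℂ[X]) : (sub2 p a b).comp r = sub2 p (a.comp r) (b.comp r) :=
  Polynomial.funext fun d => by simp only [eval_comp, eval_sub2]

theorem sub2_C_X_eq_eval (l : ℂ) : sub2 p (C l) X = p.eval (C l) :=
  Polynomial.funext fun d => by rw [eval_sub2, eval_C, eval_X, ev2]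

theorem sub2_C_X_comp_X_add_C (l m : ℂ) :
    (sub2 p (C m) X).comp (X + C l) = sub2 p (C m) (C l + X) := by
  rw [sub2_comp, C_comp, X_comp, add_comm]

theorem eval_sub2_C_X (l d : ℂ) : (sub2 p (C l) X).eval d = ev2 p l d := by
  rw [eval_sub2, eval_C, eval_X]

@[simp] theorem ev2_zero (l d : ℂ) : ev2 0 l d = 0 := by simp [ev2]

variable {p q}

theorem finite_setOf_sub2_C_X_eq_zero (hp : p ≠ 0) : {l : ℂ | sub2 p (C l) X = 0}.Finite := by
  simp only [sub2_C_X_eq_eval]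
  exact (finite_setOfPred_isRoot hp).preimage C_injective.injOn

theorem cpoly2_ext (h : ∀ l, sub2 p (C l) X = sub2 q (C l) X) : p = q :=
  eq_of_infinite_eval_eq p q <| (Set.infinite_range_of_injective C_injective).mono <| by
    rintro _ ⟨l, rfl⟩
    simpa only [sub2_C_X_eq_eval, Set.mem_ofPred_eq] using h l

/-- The linear involution `p(λ, ∂) ↦ -p(-λ-∂, ∂)` of `ℂ[λ, ∂]`; it turns the component `h` of a
flag datum of the second kind into the `Q`-part of `[x_λ a]`. -/
def negTwist : CPoly2 →ₗ[ℂ] CPoly2 where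
  toFun p := -twistL p
  map_add' p q := cpoly2_ext fun l => by
    simp only [sub2_neg, sub2_add, sub2_twistL, neg_add]
  map_smul' c p := cpoly2_ext fun l => by
    simp only [sub2_neg, sub2_smul, sub2_twistL, RingHom.id_apply, smul_neg]

theorem negTwist_apply (p : CPoly2) : negTwist p = -twistL p := rfl

theorem sub2_negTwist (p : CPoly2) (a b : ℂ[X]) :
    sub2 (negTwist p) a b = -sub2 p (-a - b) b := by
  rw [negTwist_apply, sub2_neg, sub2_twistL]

theorem ev2_negTwist (p : CPoly2) (l d : ℂ) : ev2 (negTwist p) l d = -ev2 p (-l - d) d := by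
  rw [← eval_sub2_C_X, sub2_negTwist, eval_neg, eval_sub2]
  simp

theorem negTwist_involutive : Function.Involutive negTwist := fun p => cpoly2_ext fun l => by
  rw [sub2_negTwist, sub2_negTwist, neg_neg]
  congr 1
  ring

end Substitution

/-! ### Polynomial families -/

namespace IsPolyFun

variable {R S : Type*} [AddCommGroup R] [Module ℂ R] [AddCommGroup S] [Module ℂ S]

theorem exists_finsupp_iff {g : ℂ → R} :
    IsPolyFun g ↔ ∃ c : ℕ →₀ R, ∀ l, g l = c.sum fun i r => l ^ i • r := by
  constructor
  · rintro ⟨N, c, hc⟩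
    refine ⟨∑ i ∈ Finset.range N, Finsupp.single i (c i), fun l => ?_⟩
    rw [hc l, ← Finsupp.sum_finsetSum_index (by simp) (by simp)]
    simp
  · rintro ⟨c, hc⟩
    refine ⟨c.support.sup id + 1, c, fun l => ?_⟩
    rw [hc l]
    refine Finset.sum_subset (fun i hi => ?_) fun i _ hi => ?_
    · exact Finset.mem_range.2 (Nat.lt_succ_of_le (Finset.le_sup (f := id) hi))
    · simp [Finsupp.notMem_support_iff.1 hi]

theorem add {g g' : ℂ → R} (hg : IsPolyFun g) (hg' : IsPolyFun g') :
    IsPolyFun fun l => g l + g' l := by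
  obtain ⟨c, hc⟩ := exists_finsupp_iff.1 hg
  obtain ⟨c', hc'⟩ := exists_finsupp_iff.1 hg'
  refine exists_finsupp_iff.2 ⟨c + c', fun l => ?_⟩
  rw [hc, hc', Finsupp.sum_add_index' (by simp) (by simp)]

theorem map (f : R →ₗ[ℂ] S) {g : ℂ → R} (hg : IsPolyFun g) : IsPolyFun fun l => f (g l) := by
  obtain ⟨N, c, hc⟩ := hg
  exact ⟨N, fun i => f (c i), fun l => by simp [hc]⟩

theorem id_smul {g : ℂ → R} (hg : IsPolyFun g) : IsPolyFun fun l => l • g l := by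
  obtain ⟨N, c, hc⟩ := hg
  refine ⟨N + 1, fun i => if i = 0 then 0 else c (i - 1), fun l => ?_⟩
  simp [hc, Finset.sum_range_succ', Finset.smul_sum, pow_succ', mul_smul]

theorem prodMk {g : ℂ → R} {k : ℂ → S} (hg : IsPolyFun g) (hk : IsPolyFun k) :
    IsPolyFun fun l => (g l, k l) := by
  simpa using (hg.map (LinearMap.inl ℂ R S)).add (hk.map (LinearMap.inr ℂ R S))

theorem aeval_pencil (A B : Module.End ℂ R) (p : ℂ[X]) {g : ℂ → R} (hg : IsPolyFun g) :
    IsPolyFun fun l => aeval (A + l • B) p (g l) := by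
  induction p using Polynomial.induction_on' generalizing g with
  | add p q hp hq => simpa using (hp hg).add (hq hg)
  | monomial n c =>
    induction n generalizing g with
    | zero => simpa using hg.map (LinearMap.lsmul ℂ R c)
    | succ n ih =>
      simpa [← monomial_mul_X] using ih ((hg.map A).add (hg.map B).id_smul)

theorem sub2_C_X (p : CPoly2) : IsPolyFun fun l => sub2 p (C l) X := by
  simp only [sub2_C_X_eq_eval, eval_eq_sum_range]
  refine ⟨p.natDegree + 1, p.coeff, fun l => ?_⟩
  exact Finset.sum_congr rfl fun i _ => by rw [← C_pow, smul_eq_C_mul, mul_comm]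

end IsPolyFun

/-! ### `ℂ[∂]`-modules and sets generating them -/

section Generation

variable {U W : Type*} [AddCommGroup U] [Module ℂ U] [AddCommGroup W] [Module ℂ W]

theorem aeval_smul_one_apply (c : ℂ) (p : ℂ[X]) (w : W) :
    aeval (c • (1 : Module.End ℂ W)) p w = p.eval c • w := by
  rw [← Algebra.algebraMap_eq_smul_one, aeval_algebraMap_apply_eq_algebraMap_eval,
    Module.algebraMap_end_apply]

theorem aeval_add_smul_one (D : Module.End ℂ W) (l : ℂ) (p : ℂ[X]) :
    aeval (D + l • 1) p = aeval D (p.comp (X + C l)) := by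
  rw [aeval_comp, map_add, aeval_X, aeval_C, Algebra.algebraMap_eq_smul_one]

theorem map_aeval_of_intertwines {D : Module.End ℂ U} {T : Module.End ℂ W} {f : U → W}
    (hf : IsLinearMap ℂ f) (hfD : ∀ u, f (D u) = T (f u)) (p : ℂ[X]) (u : U) :
    f (aeval D p u) = aeval T p (f u) := by
  induction p using Polynomial.induction_on' with
  | add p q hp hq => simp only [map_add, LinearMap.add_apply, hf.map_add, hp, hq]
  | monomial n c =>
    have map_pow : f ((D ^ n) u) = (T ^ n) (f u) := by
      simpa only [Module.End.pow_apply] using (Function.Semiconj.iterate_right hfD n).eq u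
    simp [aeval_monomial, hf.map_smul, map_pow]

theorem aeval_prodMap (D : Module.End ℂ U) (T : Module.End ℂ W) (p : ℂ[X]) (e : U × W) :
    aeval (D.prodMap T) p e = (aeval D p e.1, aeval T p e.2) :=
  Prod.ext (map_aeval_of_intertwines (LinearMap.fst ℂ U W).isLinear (fun _ => rfl) p e)
    (map_aeval_of_intertwines (LinearMap.snd ℂ U W).isLinear (fun _ => rfl) p e)

/-- The set `S` generates `U` as a `ℂ[∂]`-module, `∂` acting by `D`. -/
def GeneratesUnder (D : Module.End ℂ U) (S : Set U) : Prop :=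
  ∀ K ∈ D.invtSubmodule, S ⊆ K → K = ⊤

theorem GeneratesUnder.eq_of_intertwines {D : Module.End ℂ U} {S : Set U}
    (hS : GeneratesUnder D S) (T : Module.End ℂ W) {f f' : U → W}
    (hf : IsLinearMap ℂ f) (hf' : IsLinearMap ℂ f')
    (hfD : ∀ u, f (D u) = T (f u)) (hfD' : ∀ u, f' (D u) = T (f' u))
    (heq : ∀ u ∈ S, f u = f' u) : f = f' := by
  have eqLocus_eq_top : LinearMap.eqLocus (hf.mk' f) (hf'.mk' f') = ⊤ := by
    refine hS _ (fun u (hu : f u = f' u) => ?_) heq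
    change f (D u) = f' (D u)
    rw [hfD, hfD', hu]
  exact _root_.funext fun u =>
    LinearMap.mem_eqLocus.1 (eqLocus_eq_top.ge (Submodule.mem_top (x := u)))

theorem aeval_apply_mem_of_mem_invtSubmodule {D : Module.End ℂ U} {K : Submodule ℂ U}
    (hK : K ∈ D.invtSubmodule) (p : ℂ[X]) {u : U} (hu : u ∈ K) : aeval D p u ∈ K := by
  induction p using Polynomial.induction_on with
  | C c => simpa using K.smul_mem c hu
  | add p q hp hq => simpa using K.add_mem hp hq
  | monomial n c hp =>
    rw [pow_succ', mul_left_comm, map_mul, aeval_X]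
    exact hK hp

theorem generatesUnder_insert_range_inl (D : Module.End ℂ U) {T : Module.End ℂ W} {x : W}
    (hx : Function.Surjective fun p : ℂ[X] => aeval T p x) :
    GeneratesUnder (D.prodMap T) (insert (0, x) (Set.range fun a => (a, 0))) := by
  refine fun K hK hSK => Submodule.eq_top_iff'.2 ?_
  rintro ⟨a, y⟩
  obtain ⟨p, rfl⟩ := hx y
  have aeval_mem := aeval_apply_mem_of_mem_invtSubmodule hK p (hSK (Set.mem_insert _ _))
  have add_mem := K.add_mem (hSK (Set.mem_insert_of_mem _ ⟨a, rfl⟩)) aeval_mem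
  simpa [aeval_prodMap] using add_mem

end Generation

/-! ### Conformal linear and bilinear maps -/

section Conformal

variable {U V W U' V' W' : Type*} [AddCommGroup U] [Module ℂ U] [AddCommGroup V] [Module ℂ V]
  [AddCommGroup W] [Module ℂ W] [AddCommGroup U'] [Module ℂ U'] [AddCommGroup V'] [Module ℂ V']
  [AddCommGroup W'] [Module ℂ W'] {DU : Module.End ℂ U} {DV : Module.End ℂ V}
  {DW : Module.End ℂ W} {DU' : Module.End ℂ U'} {DV' : Module.End ℂ V'} {DW' : Module.End ℂ W'}

/-- A left conformal linear map `U → W[λ]`, in evaluated form: `f_λ(∂u) = -λ f_λ(u)`. -/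
structure IsLeftConformalLinear (DU : Module.End ℂ U) (f : ℂ → U → W) : Prop where
  lin : ∀ l, IsLinearMap ℂ (f l)
  poly : ∀ u, IsPolyFun fun l => f l u
  conf : ∀ l u, f l (DU u) = (-l) • f l u

/-- A conformal linear map `V → W[λ]`, in evaluated form: `f_λ(∂v) = (∂ + λ) f_λ(v)`. -/
structure IsConformalLinear (DV : Module.End ℂ V) (DW : Module.End ℂ W) (f : ℂ → V → W) :
    Prop where
  lin : ∀ l, IsLinearMap ℂ (f l)
  poly : ∀ v, IsPolyFun fun l => f l v
  conf : ∀ l v, f l (DV v) = DW (f l v) + l • f l v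

theorem IsLeftConformalLinear.prodMk {f : ℂ → U → W} {f' : ℂ → U → W'}
    (hf : IsLeftConformalLinear DU f) (hf' : IsLeftConformalLinear DU f') :
    IsLeftConformalLinear DU fun l u => (f l u, f' l u) where
  lin l := ⟨fun u v => by simp [(hf.lin l).map_add, (hf'.lin l).map_add],
    fun c u => by simp [(hf.lin l).map_smul, (hf'.lin l).map_smul]⟩
  poly u := (hf.poly u).prodMk (hf'.poly u)
  conf l u := by simp [hf.conf, hf'.conf]

theorem IsConformalLinear.prodMk {f : ℂ → V → W} {f' : ℂ → V → W'}
    (hf : IsConformalLinear DV DW f) (hf' : IsConformalLinear DV DW' f') :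
    IsConformalLinear DV (DW.prodMap DW') fun l v => (f l v, f' l v) where
  lin l := ⟨fun u v => by simp [(hf.lin l).map_add, (hf'.lin l).map_add],
    fun c u => by simp [(hf.lin l).map_smul, (hf'.lin l).map_smul]⟩
  poly v := (hf.poly v).prodMk (hf'.poly v)
  conf l v := by simp [hf.conf, hf'.conf]

theorem IsPolyFun.aeval_sub2 (D : Module.End ℂ W) (p : CPoly2) (w : W) :
    IsPolyFun fun l => aeval D (sub2 p (C l) X) w :=
  (IsPolyFun.sub2_C_X p).map (LinearMap.applyₗ w ∘ₗ (aeval D).toLinearMap)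

theorem isLeftConformalLinear_aeval_sub2 {h : U →ₗ[ℂ] CPoly2}
    (hconf : ∀ u, h (DU u) = -X * h u) (w : W) :
    IsLeftConformalLinear DU fun l u => aeval DW (sub2 (h u) (C l) X) w where
  lin l := ⟨fun u v => by simp, fun c u => by simp⟩
  poly u := .aeval_sub2 DW (h u) w
  conf l u := by simp [hconf]

theorem isConformalLinear_aeval_sub2 {g : V →ₗ[ℂ] CPoly2}
    (hconf : ∀ v, g (DV v) = (X + C X) * g v) (w : W) :
    IsConformalLinear DV DW fun l v => aeval DW (sub2 (g v) (C l) X) w where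
  lin l := ⟨fun u v => by simp, fun c u => by simp⟩
  poly v := .aeval_sub2 DW (g v) w
  conf l v := by simp [hconf, add_comm]

namespace IsConformalBilin

variable {f f' : ℂ → U → V → W}

theorem isLinearMap_left (hf : IsConformalBilin DU DV DW f) (l : ℂ) (v : V) :
    IsLinearMap ℂ fun u => f l u v :=
  ⟨fun u u' => hf.add_left l u u' v, fun c u => hf.smul_left l c u v⟩

theorem isLinearMap_right (hf : IsConformalBilin DU DV DW f) (l : ℂ) (u : U) :
    IsLinearMap ℂ (f l u) :=
  ⟨hf.add_right l u, fun c v => hf.smul_right l c u v⟩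

theorem isLeftConformalLinear (hf : IsConformalBilin DU DV DW f) (v : V) :
    IsLeftConformalLinear DU fun l u => f l u v :=
  ⟨fun l => hf.isLinearMap_left l v, fun u => hf.poly u v, fun l u => hf.conf_left l u v⟩

theorem isConformalLinear (hf : IsConformalBilin DU DV DW f) (u : U) :
    IsConformalLinear DV DW fun l v => f l u v :=
  ⟨fun l => hf.isLinearMap_right l u, fun v => hf.poly u v, fun l v => hf.conf_right l u v⟩

theorem aeval_left (hf : IsConformalBilin DU DV DW f) (l : ℂ) (p : ℂ[X]) (u : U) (v : V) :
    f l (aeval DU p u) v = p.eval (-l) • f l u v :=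
  (map_aeval_of_intertwines (T := (-l) • 1) (hf.isLinearMap_left l v)
    (fun u => hf.conf_left l u v) p u).trans (aeval_smul_one_apply (-l) p _)

theorem aeval_right (hf : IsConformalBilin DU DV DW f) (l : ℂ) (p : ℂ[X]) (u : U) (v : V) :
    f l u (aeval DV p v) = aeval DW (p.comp (X + C l)) (f l u v) := by
  rw [← aeval_add_smul_one]
  exact map_aeval_of_intertwines (hf.isLinearMap_right l u) (fun v => hf.conf_right l u v) p v

theorem add (hf : IsConformalBilin DU DV DW f) (hf' : IsConformalBilin DU DV DW f') :
    IsConformalBilin DU DV DW fun l u v => f l u v + f' l u v where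
  add_left l u u' v := by rw [hf.add_left, hf'.add_left, add_add_add_comm]
  smul_left l c u v := by rw [hf.smul_left, hf'.smul_left, smul_add]
  add_right l u v v' := by rw [hf.add_right, hf'.add_right, add_add_add_comm]
  smul_right l c u v := by rw [hf.smul_right, hf'.smul_right, smul_add]
  poly u v := (hf.poly u v).add (hf'.poly u v)
  conf_left l u v := by rw [hf.conf_left, hf'.conf_left, smul_add]
  conf_right l u v := by
    rw [hf.conf_right, hf'.conf_right, map_add, smul_add, add_add_add_comm]

theorem comp (hf : IsConformalBilin DU DV DW f) (φ : U' →ₗ[ℂ] U) (ψ : V' →ₗ[ℂ] V)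
    (χ : W →ₗ[ℂ] W') (hφ : ∀ u, φ (DU' u) = DU (φ u)) (hψ : ∀ v, ψ (DV' v) = DV (ψ v))
    (hχ : ∀ w, χ (DW w) = DW' (χ w)) :
    IsConformalBilin DU' DV' DW' fun l u v => χ (f l (φ u) (ψ v)) where
  add_left l u u' v := by rw [map_add, hf.add_left, map_add]
  smul_left l c u v := by rw [map_smul, hf.smul_left, map_smul]
  add_right l u v v' := by rw [map_add, hf.add_right, map_add]
  smul_right l c u v := by rw [map_smul, hf.smul_right, map_smul]
  poly u v := (hf.poly _ _).map χ
  conf_left l u v := by rw [hφ, hf.conf_left, map_smul]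
  conf_right l u v := by rw [hψ, hf.conf_right, map_add, map_smul, hχ]

theorem ext_of_generates (hf : IsConformalBilin DU DV DW f) (hf' : IsConformalBilin DU DV DW f')
    {S : Set U} {T : Set V} (hS : GeneratesUnder DU S) (hT : GeneratesUnder DV T) {l : ℂ}
    (heq : ∀ u ∈ S, ∀ v ∈ T, f l u v = f' l u v) (u : U) (v : V) : f l u v = f' l u v := by
  refine congrFun (hS.eq_of_intertwines ((-l) • 1) (hf.isLinearMap_left l v)
    (hf'.isLinearMap_left l v) (fun u => hf.conf_left l u v) (fun u => hf'.conf_left l u v)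
    fun u hu => ?_) u
  exact congrFun (hT.eq_of_intertwines (DW + l • 1) (hf.isLinearMap_right l u)
    (hf'.isLinearMap_right l u) (fun v => hf.conf_right l u v) (fun v => hf'.conf_right l u v)
    (heq u hu)) v

end IsConformalBilin

/-- The Jacobi identity of the `λ`-bracket `B` at the triple `(u, v, w)` and the values
`(l, m)` of `(λ, μ)`. -/
def JacobiAt (B : ℂ → U → U → U) (l m : ℂ) (u v w : U) : Prop :=
  B l u (B m v w) = B (l + m) (B l u v) w + B m v (B l u w)

-- Both sides of the identity transform by `-λ`, `-μ` and `∂ + λ + μ` when `∂` is applied to the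
-- first, second and third argument, respectively.
theorem IsConformalBilin.jacobiAt_of_generates {B : ℂ → U → U → U}
    (hB : IsConformalBilin DU DU DU B) {S : Set U} (hS : GeneratesUnder DU S) {l m : ℂ}
    (hJ : ∀ u ∈ S, ∀ v ∈ S, ∀ w ∈ S, JacobiAt B l m u v w) (u v w : U) :
    JacobiAt B l m u v w := by
  have third : ∀ u ∈ S, ∀ v ∈ S, ∀ w, JacobiAt B l m u v w := fun u hu v hv w =>
    congrFun (hS.eq_of_intertwines (DU + (l + m) • 1)
      ⟨by simp [hB.add_right], by simp [hB.smul_right]⟩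
      ⟨fun w w' => by simp only [hB.add_right]; abel, fun c w => by simp [hB.smul_right]⟩
      (fun w => by
        simp only [hB.conf_right, hB.add_right, hB.smul_right, LinearMap.add_apply,
          LinearMap.smul_apply, Module.End.one_apply]
        module)
      (fun w => by
        simp only [hB.conf_right, hB.add_right, hB.smul_right, LinearMap.add_apply, map_add,
          LinearMap.smul_apply, Module.End.one_apply]
        module)
      (hJ u hu v hv)) w
  have second : ∀ u ∈ S, ∀ v w, JacobiAt B l m u v w := fun u hu v w =>
    congrFun (hS.eq_of_intertwines ((-m) • 1)
      ⟨by simp [hB.add_left, hB.add_right], by simp [hB.smul_left, hB.smul_right]⟩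
      ⟨fun v v' => by simp only [hB.add_left, hB.add_right]; abel,
        fun c v => by simp [hB.smul_left, hB.smul_right]⟩
      (fun v => by simp [hB.conf_left, hB.isLinearMap_right l u |>.map_neg, hB.smul_right])
      (fun v => by
        simp only [hB.conf_left, hB.conf_right, hB.add_left, hB.smul_left, LinearMap.smul_apply,
          Module.End.one_apply]
        module)
      (fun v hv => third u hu v hv w)) v
  exact congrFun (hS.eq_of_intertwines ((-l) • 1)
      ⟨by simp [hB.add_left], by simp [hB.smul_left]⟩
      ⟨fun v v' => by simp only [hB.add_left, hB.add_right]; abel,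
        fun c v => by simp [hB.smul_left, hB.smul_right]⟩
      (fun u => hB.conf_left l u _)
      (fun u => by simp only [hB.conf_left, hB.smul_left, hB.smul_right, LinearMap.smul_apply,
          Module.End.one_apply, smul_add])
      (fun u hu => second u hu v w)) u

end Conformal

/-! ### Conformal maps on a free module of rank one -/

section FreeGenerator

variable {Q U V W : Type*} [AddCommGroup Q] [Module ℂ Q] [AddCommGroup U] [Module ℂ U]
  [AddCommGroup V] [Module ℂ V] [AddCommGroup W] [Module ℂ W] {DQ : Module.End ℂ Q}
  {DU : Module.End ℂ U} {DV : Module.End ℂ V} {DW : Module.End ℂ W} {x : Q}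

/-- `Q = ℂ[∂]x` is free of rank one on the generator `x`, `∂` acting by `D`. -/
def IsFreeGenerator (D : Module.End ℂ Q) (x : Q) : Prop :=
  Function.Bijective fun p : ℂ[X] => aeval D p x

namespace IsFreeGenerator

/-- The coordinate of an element of `ℂ[∂]x` with respect to `x`. -/
def coord (hx : IsFreeGenerator DQ x) : Q ≃ₗ[ℂ] ℂ[X] :=
  (LinearEquiv.ofBijective (LinearMap.applyₗ x ∘ₗ (aeval DQ).toLinearMap) hx).symm

theorem aeval_coord (hx : IsFreeGenerator DQ x) (q : Q) : aeval DQ (hx.coord q) x = q :=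
  hx.coord.symm_apply_apply q

theorem coord_self (hx : IsFreeGenerator DQ x) : hx.coord x = 1 :=
  hx.injective (by simp [aeval_coord])

theorem coord_map (hx : IsFreeGenerator DQ x) (q : Q) : hx.coord (DQ q) = X * hx.coord q :=
  hx.injective (by simp [aeval_coord])

theorem mk_aeval_eq_iff {M : Type*} (hx : IsFreeGenerator DQ x) {a b : M} {p q : ℂ[X]} :
    (a, aeval DQ p x) = (b, aeval DQ q x) ↔ a = b ∧ p = q := by
  rw [Prod.mk.injEq]
  exact and_congr_right fun _ => hx.injective.eq_iff

theorem mk_aeval_eq_add_iff {M : Type*} [AddCommGroup M] (hx : IsFreeGenerator DQ x) {a b c : M}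
    {p q r : ℂ[X]} :
    (a, aeval DQ p x) = (b, aeval DQ q x) + (c, aeval DQ r x) ↔ a = b + c ∧ p = q + r := by
  rw [Prod.mk_add_mk, ← LinearMap.add_apply, ← map_add, hx.mk_aeval_eq_iff]

theorem mk_aeval_eq_zero_iff {M : Type*} [AddCommGroup M] (hx : IsFreeGenerator DQ x) {a : M}
    {p : ℂ[X]} : (a, aeval DQ p x) = 0 ↔ a = 0 ∧ p = 0 := by
  rw [Prod.mk_eq_zero]
  exact and_congr_right fun _ => hx.injective.eq_iff' (by simp)

theorem exists_aeval_sub2_eq (hx : IsFreeGenerator DQ x) {f : ℂ → Q} (hf : IsPolyFun f) :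
    ∃ p : CPoly2, ∀ l, aeval DQ (sub2 p (C l) X) x = f l := by
  obtain ⟨N, c, hc⟩ := hf
  refine ⟨∑ i ∈ Finset.range N, X ^ i * C (hx.coord (c i)), fun l => ?_⟩
  simp only [sub2_C_X_eq_eval, hc, eval_finsetSum, eval_mul, eval_pow, eval_X, eval_C, map_sum,
    LinearMap.sum_apply, ← C_pow, ← smul_eq_C_mul, map_smul, LinearMap.smul_apply, hx.aeval_coord]

theorem exists_linearMap_aeval_sub2_eq (hx : IsFreeGenerator DQ x) {f : ℂ → U → Q}
    (hlin : ∀ l, IsLinearMap ℂ (f l)) (hpoly : ∀ u, IsPolyFun fun l => f l u) :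
    ∃ h : U →ₗ[ℂ] CPoly2, ∀ l u, aeval DQ (sub2 (h u) (C l) X) x = f l u := by
  choose h hh using fun u => hx.exists_aeval_sub2_eq (hpoly u)
  refine ⟨⟨⟨h, fun u v => ?_⟩, fun c u => ?_⟩, fun l u => hh u l⟩
  · exact cpoly2_ext fun l => hx.injective (by simp [hh, (hlin l).map_add])
  · exact cpoly2_ext fun l => hx.injective (by simp [hh, (hlin l).map_smul])

theorem map_eq_neg_X_mul (hx : IsFreeGenerator DQ x) {f : ℂ → U → Q}
    (hf : IsLeftConformalLinear DU f) {h : U →ₗ[ℂ] CPoly2}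
    (hh : ∀ l u, aeval DQ (sub2 (h u) (C l) X) x = f l u) (u : U) : h (DU u) = -X * h u :=
  cpoly2_ext fun l => hx.injective (by simp [hh, hf.conf])

theorem isLeftConformalLinear_coord_smul (hx : IsFreeGenerator DQ x) {w : ℂ → W}
    (hw : IsPolyFun w) :
    IsLeftConformalLinear DQ fun l q => (hx.coord q).eval (-l) • w l where
  lin l := ⟨fun q q' => by simp [add_smul], fun c q => by simp [mul_smul]⟩
  poly q := by simpa [← aeval_smul_one_apply] using hw.aeval_pencil 0 (-1) (hx.coord q)
  conf l q := by simp [hx.coord_map, mul_smul]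

theorem isConformalBilin_aeval_coord (hx : IsFreeGenerator DQ x) {f : ℂ → U → W}
    (hf : IsLeftConformalLinear DU f) :
    IsConformalBilin DU DQ DW fun l u q => aeval (DW + l • 1) (hx.coord q) (f l u) where
  add_left l u u' q := by rw [(hf.lin l).map_add, map_add]
  smul_left l c u q := by rw [(hf.lin l).map_smul, map_smul]
  add_right l u q q' := by rw [map_add, map_add, LinearMap.add_apply]
  smul_right l c u q := by rw [map_smul, map_smul, LinearMap.smul_apply]
  poly u q := (hf.poly u).aeval_pencil DW 1 (hx.coord q)
  conf_left l u q := by rw [hf.conf, map_smul]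
  conf_right l u q := by simp [hx.coord_map]

theorem isConformalBilin_coord_smul (hx : IsFreeGenerator DQ x) {f : ℂ → V → W}
    (hf : IsConformalLinear DV DW f) :
    IsConformalBilin DQ DV DW fun l q v => (hx.coord q).eval (-l) • f l v where
  add_left l q q' v := by rw [map_add, eval_add, add_smul]
  smul_left l c q v := by rw [map_smul, eval_smul, smul_assoc]
  add_right l q v v' := by rw [(hf.lin l).map_add, smul_add]
  smul_right l c q v := by rw [(hf.lin l).map_smul, smul_comm]
  poly q v := (hx.isLeftConformalLinear_coord_smul (hf.poly v)).poly q
  conf_left l q v := by rw [hx.coord_map, eval_mul, eval_X, mul_smul]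
  conf_right l q v := by rw [hf.conf, map_smul, smul_add, smul_comm l]

end IsFreeGenerator

end FreeGenerator

/-! ### Brackets and their values at the generators -/

section FlagBracket

variable {R Q : Type*} [AddCommGroup R] [Module ℂ R] [AddCommGroup Q] [Module ℂ Q]
  {DR : Module.End ℂ R} {DQ : Module.End ℂ Q} {br : ℂ → R → R → R} {x : Q}

/-- The `λ`-bracket `B` on `R ⊕ ℂ[∂]x` extends the bracket of `R`, takes at the generators the
values prescribed by the 5-tuple `F = (h, D, T, Q₀, P)`, and `g_λ(a, ∂)x` is the `Q`-part of
`[x_λ a]`.  The two kinds of flag data correspond to `g = 0` and `g = negTwist ∘ h`. -/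
structure HasFlagData (DR : Module.End ℂ R) (DQ : Module.End ℂ Q) (br : ℂ → R → R → R) (x : Q)
    (B : ℂ → R × Q → R × Q → R × Q) (F : FlagData R DR) (g : R →ₗ[ℂ] CPoly2) : Prop where
  rr : ∀ l a b, B l (a, 0) (b, 0) = (br l a b, 0)
  rx : ∀ l a, B l (a, 0) (0, x) = (F.Dm l a, aeval DQ (sub2 (F.h a) (C l) X) x)
  xr : ∀ l a, B l (0, x) (a, 0) = (F.Tm l a, aeval DQ (sub2 (g a) (C l) X) x)
  xx : ∀ l, B l (0, x) (0, x) = (F.Q0 l, aeval DQ (sub2 F.P (C l) X) x)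

/-- The `λ`-bracket on `R ⊕ ℂ[∂]x` extending the one of `R` with the values at the generators
prescribed by `F` and `g`. -/
def flagBracket (hx : IsFreeGenerator DQ x) (br : ℂ → R → R → R) (F : FlagData R DR)
    (g : R →ₗ[ℂ] CPoly2) : ℂ → R × Q → R × Q → R × Q := fun l u v =>
  (br l u.1 v.1, 0)
    + aeval (DR.prodMap DQ + l • 1) (hx.coord v.2)
        (F.Dm l u.1, aeval DQ (sub2 (F.h u.1) (C l) X) x)
    + (hx.coord u.2).eval (-l) • (F.Tm l v.1, aeval DQ (sub2 (g v.1) (C l) X) x)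
    + aeval (DR.prodMap DQ + l • 1) (hx.coord v.2)
        ((hx.coord u.2).eval (-l) • (F.Q0 l, aeval DQ (sub2 F.P (C l) X) x))

theorem isConformalBilin_flagBracket (hbr : IsConformalBilin DR DR DR br)
    (hx : IsFreeGenerator DQ x) (F : FlagData R DR) {g : R →ₗ[ℂ] CPoly2}
    (hg : ∀ a, g (DR a) = (X + C X) * g a) :
    IsConformalBilin (DR.prodMap DQ) (DR.prodMap DQ) (DR.prodMap DQ)
      (flagBracket hx br F g) := by
  have Dm_h : IsLeftConformalLinear DR fun l a =>
      (F.Dm l a, aeval DQ (sub2 (F.h a) (C l) X) x) :=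
    .prodMk ⟨F.Dm_lin, F.Dm_poly, F.Dm_conf⟩ (isLeftConformalLinear_aeval_sub2 F.h_conf x)
  have Tm_g : IsConformalLinear DR (DR.prodMap DQ) fun l a =>
      (F.Tm l a, aeval DQ (sub2 (g a) (C l) X) x) :=
    .prodMk ⟨F.Tm_lin, F.Tm_poly, F.Tm_conf⟩ (isConformalLinear_aeval_sub2 hg x)
  have Q0_P := hx.isLeftConformalLinear_coord_smul (F.Q0_poly.prodMk (.aeval_sub2 DQ F.P x))
  let fst := LinearMap.fst ℂ R Q
  let snd := LinearMap.snd ℂ R Q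
  have rr := hbr.comp (DU' := DR.prodMap DQ) (DV' := DR.prodMap DQ) (DW' := DR.prodMap DQ)
    fst fst (.inl ℂ R Q) (fun _ => rfl) (fun _ => rfl) (by simp)
  have rx := (hx.isConformalBilin_aeval_coord (DW := DR.prodMap DQ) Dm_h).comp
    (DU' := DR.prodMap DQ) (DV' := DR.prodMap DQ) (DW' := DR.prodMap DQ)
    fst snd .id (fun _ => rfl) (fun _ => rfl) (fun _ => rfl)
  have xr := (hx.isConformalBilin_coord_smul Tm_g).comp
    (DU' := DR.prodMap DQ) (DV' := DR.prodMap DQ) (DW' := DR.prodMap DQ)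
    snd fst .id (fun _ => rfl) (fun _ => rfl) (fun _ => rfl)
  have xx := (hx.isConformalBilin_aeval_coord (DW := DR.prodMap DQ) Q0_P).comp
    (DU' := DR.prodMap DQ) (DV' := DR.prodMap DQ) (DW' := DR.prodMap DQ)
    snd snd .id (fun _ => rfl) (fun _ => rfl) (fun _ => rfl)
  exact ((rr.add rx).add xr).add xx

theorem hasFlagData_flagBracket (hbr : IsConformalBilin DR DR DR br)
    (hx : IsFreeGenerator DQ x) (F : FlagData R DR) (g : R →ₗ[ℂ] CPoly2) :
    HasFlagData DR DQ br x (flagBracket hx br F g) F g := by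
  have br_zero_left (l : ℂ) (b : R) : br l 0 b = 0 := (hbr.isLinearMap_left l b).map_zero
  have br_zero_right (l : ℂ) (a : R) : br l a 0 = 0 := (hbr.isLinearMap_right l a).map_zero
  have Dm_zero (l : ℂ) : F.Dm l 0 = 0 := (F.Dm_lin l).map_zero
  have Tm_zero (l : ℂ) : F.Tm l 0 = 0 := (F.Tm_lin l).map_zero
  constructor <;> intros <;>
    simp [flagBracket, hx.coord_self, br_zero_left, br_zero_right, Dm_zero, Tm_zero]

theorem exists_hasFlagData (hx : IsFreeGenerator DQ x) {B : ℂ → R × Q → R × Q → R × Q}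
    (hB : IsConformalBilin (DR.prodMap DQ) (DR.prodMap DQ) (DR.prodMap DQ) B)
    (hrr : ∀ l a b, B l (a, 0) (b, 0) = (br l a b, 0)) :
    ∃ (F : FlagData R DR) (g : R →ₗ[ℂ] CPoly2), HasFlagData DR DQ br x B F g := by
  let inl := LinearMap.inl ℂ R Q
  have inl_map (a : R) : inl (DR a) = DR.prodMap DQ (inl a) := by simp [inl]
  have left_fst := (hB.comp (DV' := DR.prodMap DQ) (DW' := DR) inl .id (.fst ℂ R Q) inl_map
    (fun _ => rfl) fun _ => rfl).isLeftConformalLinear (0, x)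
  have left_snd := (hB.comp (DV' := DR.prodMap DQ) (DW' := DQ) inl .id (.snd ℂ R Q) inl_map
    (fun _ => rfl) fun _ => rfl).isLeftConformalLinear (0, x)
  have right_fst := (hB.comp (DU' := DR.prodMap DQ) (DW' := DR) .id inl (.fst ℂ R Q)
    (fun _ => rfl) inl_map fun _ => rfl).isConformalLinear (0, x)
  have right_snd := (hB.comp (DU' := DR.prodMap DQ) (DW' := DQ) .id inl (.snd ℂ R Q)
    (fun _ => rfl) inl_map fun _ => rfl).isConformalLinear (0, x)
  obtain ⟨h, hh⟩ := hx.exists_linearMap_aeval_sub2_eq left_snd.lin left_snd.poly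
  obtain ⟨g, hg⟩ := hx.exists_linearMap_aeval_sub2_eq right_snd.lin right_snd.poly
  obtain ⟨P, hP⟩ := hx.exists_aeval_sub2_eq ((hB.poly (0, x) (0, x)).map (.snd ℂ R Q))
  let F : FlagData R DR :=
    { h, P
      Dm := fun l a => (B l (a, 0) (0, x)).1
      Tm := fun l a => (B l (0, x) (a, 0)).1
      Q0 := fun l => (B l (0, x) (0, x)).1
      h_conf := hx.map_eq_neg_X_mul left_snd hh
      Dm_lin := left_fst.lin
      Dm_poly := left_fst.poly
      Dm_conf := left_fst.conf
      Tm_lin := right_fst.lin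
      Tm_poly := right_fst.poly
      Tm_conf := right_fst.conf
      Q0_poly := (hB.poly (0, x) (0, x)).map (.fst ℂ R Q) }
  exact ⟨F, g, hrr, fun l a => Prod.ext rfl (hh l a).symm, fun l a => Prod.ext rfl (hg l a).symm,
    fun l => Prod.ext rfl (hP l).symm⟩

end FlagBracket

/-! ### The Jacobi identity at the generators -/

section FlagDatum

variable {R Q : Type*} [AddCommGroup R] [Module ℂ R] [AddCommGroup Q] [Module ℂ Q]
  {DR : Module.End ℂ R} {DQ : Module.End ℂ Q} {br : ℂ → R → R → R} {x : Q}

theorem JacobiAt.swap_iff {E : Type*} [AddCommGroup E] [Module ℂ E] {D : Module.End ℂ E}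
    {B : ℂ → E → E → E} (hB : IsConformalBilin D D D B) {l m : ℂ} {u v w : E}
    (h : JacobiAt B l m u v w) :
    JacobiAt B m l v u w ↔ B (l + m) (B m v u + B l u v) w = 0 := by
  rw [JacobiAt, hB.add_left, add_comm m l, h]
  constructor <;> intro h <;> linear_combination (norm := module) -h

/-- The compatibility conditions on a 5-tuple `F = (h, D, T, Q₀, P)` and on the `Q`-part `g` of
`[x_λ a]` that express the Jacobi identity of the bracket they define on `R ⊕ ℂ[∂]x`.  A field
named after a triple of generators, where `r` stands for an element of `R`, is the `R`-part
(`_fst`) or the `Q`-part (`_snd`) of the Jacobi identity at that triple; for `xrr` and `xrx` the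
identity at `rxr` and `rxx` has been added. -/
structure IsFlagDatum (DR : Module.End ℂ R) (br : ℂ → R → R → R) (F : FlagData R DR)
    (g : R →ₗ[ℂ] CPoly2) : Prop where
  rrx_fst : ∀ l m a b, F.Dm (l + m) (br l a b)
      = br l a (F.Dm m b) + aeval DR (sub2 (F.h b) (C m) (C l + X)) (F.Dm l a)
        - br m b (F.Dm l a) - aeval DR (sub2 (F.h a) (C l) (C m + X)) (F.Dm m b)
  rrx_snd : ∀ l m a b, sub2 (F.h (br l a b)) (C (l + m)) X
      = sub2 (F.h b) (C m) (C l + X) * sub2 (F.h a) (C l) X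
        - sub2 (F.h a) (C l) (C m + X) * sub2 (F.h b) (C m) X
  rxr_fst : ∀ l m a b, F.Tm m (br l a b)
      = br l a (F.Tm m b) + aeval DR (sub2 (g b) (C m) (C l + X)) (F.Dm l a)
        - br (l + m) (F.Dm l a) b - ev2 (F.h a) l (-l - m) • F.Tm (l + m) b
  rxr_snd : ∀ l m a b, sub2 (g (br l a b)) (C m) X
      = sub2 (g b) (C m) (C l + X) * sub2 (F.h a) (C l) X
        - ev2 (F.h a) l (-l - m) • sub2 (g b) (C (l + m)) X
  xrr_fst : ∀ l m a b, br (l + m) (F.Tm m a) b + br (l + m) (F.Dm l a) b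
      + (ev2 (F.h a) l (-l - m) + ev2 (g a) m (-l - m)) • F.Tm (l + m) b = 0
  xrr_snd : ∀ l m a b,
    (ev2 (F.h a) l (-l - m) + ev2 (g a) m (-l - m)) • sub2 (g b) (C (l + m)) X = 0
  rxx_fst : ∀ l m a, aeval DR (sub2 F.P (C m) (C l + X)) (F.Dm l a)
      = F.Dm (l + m) (F.Dm l a) + ev2 (F.h a) l (-l - m) • F.Q0 (l + m)
        + F.Tm m (F.Dm l a) + aeval DR (sub2 (F.h a) (C l) (C m + X)) (F.Q0 m)
        - br l a (F.Q0 m)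
  rxx_snd : ∀ l m a, sub2 F.P (C m) (C l + X) * sub2 (F.h a) (C l) X
      = ev2 (F.h a) l (-l - m) • sub2 F.P (C (l + m)) X + sub2 (g (F.Dm l a)) (C m) X
        + sub2 (F.h a) (C l) (C m + X) * sub2 F.P (C m) X
        + sub2 (F.h (F.Dm l a)) (C (l + m)) X
  xrx_fst : ∀ l m a, F.Dm (l + m) (F.Tm m a) + F.Dm (l + m) (F.Dm l a)
      + (ev2 (F.h a) l (-l - m) + ev2 (g a) m (-l - m)) • F.Q0 (l + m) = 0
  xrx_snd : ∀ l m a, (ev2 (F.h a) l (-l - m) + ev2 (g a) m (-l - m)) • sub2 F.P (C (l + m)) X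
      + sub2 (F.h (F.Dm l a)) (C (l + m)) X + sub2 (F.h (F.Tm m a)) (C (l + m)) X = 0
  xxr_fst : ∀ l m a, ev2 F.P l (-l - m) • F.Tm (l + m) a
      = F.Tm l (F.Tm m a) + aeval DR (sub2 (g a) (C m) (C l + X)) (F.Q0 l)
        - br (l + m) (F.Q0 l) a - F.Tm m (F.Tm l a)
        - aeval DR (sub2 (g a) (C l) (C m + X)) (F.Q0 m)
  xxr_snd : ∀ l m a, ev2 F.P l (-l - m) • sub2 (g a) (C (l + m)) X
      = sub2 (g (F.Tm m a)) (C l) X + sub2 (g a) (C m) (C l + X) * sub2 F.P (C l) X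
        - sub2 (g (F.Tm l a)) (C m) X - sub2 (g a) (C l) (C m + X) * sub2 F.P (C m) X
  xxx_fst : ∀ l m, F.Tm l (F.Q0 m)
      = F.Dm (l + m) (F.Q0 l) + ev2 F.P l (-l - m) • F.Q0 (l + m) + F.Tm m (F.Q0 l)
        + aeval DR (sub2 F.P (C l) (C m + X)) (F.Q0 m)
        - aeval DR (sub2 F.P (C m) (C l + X)) (F.Q0 l)
  xxx_snd : ∀ l m, sub2 (g (F.Q0 m)) (C l) X
      = sub2 (F.h (F.Q0 l)) (C (l + m)) X + sub2 (g (F.Q0 l)) (C m) X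
        + ev2 F.P l (-l - m) • sub2 F.P (C (l + m)) X
        + sub2 F.P (C l) (C m + X) * sub2 F.P (C m) X
        - sub2 F.P (C m) (C l + X) * sub2 F.P (C l) X

theorem mk_aeval_eq_add_aeval (DR : Module.End ℂ R) (a : R) (p : ℂ[X]) :
    ((a, aeval DQ p x) : R × Q) = (a, 0) + aeval (DR.prodMap DQ) p (0, x) := by
  simp [aeval_prodMap]

namespace HasFlagData

variable {B : ℂ → R × Q → R × Q → R × Q} {F : FlagData R DR} {g : R →ₗ[ℂ] CPoly2}

section Evaluation

variable (hF : HasFlagData DR DQ br x B F g)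
  (hB : IsConformalBilin (DR.prodMap DQ) (DR.prodMap DQ) (DR.prodMap DQ) B)
include hF hB

theorem apply_inl_mk (l : ℂ) (a b : R) (p : ℂ[X]) :
    B l (a, 0) (b, aeval DQ p x) = (br l a b + aeval DR (p.comp (X + C l)) (F.Dm l a),
      aeval DQ (p.comp (X + C l) * sub2 (F.h a) (C l) X) x) := by
  rw [mk_aeval_eq_add_aeval DR, hB.add_right, hB.aeval_right, hF.rr, hF.rx, aeval_prodMap]
  simp

theorem apply_gen_mk (l : ℂ) (b : R) (p : ℂ[X]) :
    B l (0, x) (b, aeval DQ p x) = (F.Tm l b + aeval DR (p.comp (X + C l)) (F.Q0 l),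
      aeval DQ (sub2 (g b) (C l) X + p.comp (X + C l) * sub2 F.P (C l) X) x) := by
  rw [mk_aeval_eq_add_aeval DR, hB.add_right, hB.aeval_right, hF.xr, hF.xx, aeval_prodMap]
  simp

theorem apply_mk_inl (l : ℂ) (a b : R) (p : ℂ[X]) :
    B l (a, aeval DQ p x) (b, 0) = (br l a b + p.eval (-l) • F.Tm l b,
      aeval DQ (p.eval (-l) • sub2 (g b) (C l) X) x) := by
  rw [mk_aeval_eq_add_aeval DR, hB.add_left, hB.aeval_left, hF.rr, hF.xr]
  simp

theorem apply_mk_gen (l : ℂ) (a : R) (p : ℂ[X]) :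
    B l (a, aeval DQ p x) (0, x) = (F.Dm l a + p.eval (-l) • F.Q0 l,
      aeval DQ (sub2 (F.h a) (C l) X + p.eval (-l) • sub2 F.P (C l) X) x) := by
  rw [mk_aeval_eq_add_aeval DR, hB.add_left, hB.aeval_left, hF.rx, hF.xx]
  simp

end Evaluation

theorem apply_gen_inl_add_apply_inl_gen (hF : HasFlagData DR DQ br x B F g) (l m : ℂ) (a : R) :
    B m (0, x) (a, 0) + B l (a, 0) (0, x)
      = (F.Tm m a + F.Dm l a,
        aeval DQ (sub2 (F.h a) (C l) X + sub2 (g a) (C m) X) x) := by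
  rw [hF.xr, hF.rx, Prod.mk_add_mk, ← LinearMap.add_apply, ← map_add, add_comm (sub2 (g a) _ _)]

section Jacobi

variable (hx : IsFreeGenerator DQ x) (hF : HasFlagData DR DQ br x B F g)
  (hB : IsConformalBilin (DR.prodMap DQ) (DR.prodMap DQ) (DR.prodMap DQ) B)
include hx hF hB

theorem jacobiAt_rrx_iff (l m : ℂ) (a b : R) :
    JacobiAt B l m (a, 0) (b, 0) (0, x) ↔
      F.Dm (l + m) (br l a b)
        = br l a (F.Dm m b) + aeval DR (sub2 (F.h b) (C m) (C l + X)) (F.Dm l a)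
          - br m b (F.Dm l a) - aeval DR (sub2 (F.h a) (C l) (C m + X)) (F.Dm m b) ∧
      sub2 (F.h (br l a b)) (C (l + m)) X
        = sub2 (F.h b) (C m) (C l + X) * sub2 (F.h a) (C l) X
          - sub2 (F.h a) (C l) (C m + X) * sub2 (F.h b) (C m) X := by
  rw [JacobiAt, hF.rx, hF.rr, hF.rx, hF.rx, hF.apply_inl_mk hB, hF.apply_inl_mk hB,
    hx.mk_aeval_eq_add_iff]
  simp only [sub2_C_X_comp_X_add_C]
  exact and_congr (by grind) (by grind)

theorem jacobiAt_rxr_iff (l m : ℂ) (a b : R) :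
    JacobiAt B l m (a, 0) (0, x) (b, 0) ↔
      F.Tm m (br l a b)
        = br l a (F.Tm m b) + aeval DR (sub2 (g b) (C m) (C l + X)) (F.Dm l a)
          - br (l + m) (F.Dm l a) b - ev2 (F.h a) l (-l - m) • F.Tm (l + m) b ∧
      sub2 (g (br l a b)) (C m) X
        = sub2 (g b) (C m) (C l + X) * sub2 (F.h a) (C l) X
          - ev2 (F.h a) l (-l - m) • sub2 (g b) (C (l + m)) X := by
  rw [JacobiAt, hF.xr, hF.rr, hF.rx, hF.apply_inl_mk hB, hF.apply_mk_inl hB, hF.xr,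
    hx.mk_aeval_eq_add_iff]
  simp only [sub2_C_X_comp_X_add_C, eval_sub2_C_X, neg_add']
  exact and_congr (by grind) (by grind)

theorem jacobiAt_rxx_iff (l m : ℂ) (a : R) :
    JacobiAt B l m (a, 0) (0, x) (0, x) ↔
      aeval DR (sub2 F.P (C m) (C l + X)) (F.Dm l a)
        = F.Dm (l + m) (F.Dm l a) + ev2 (F.h a) l (-l - m) • F.Q0 (l + m)
          + F.Tm m (F.Dm l a) + aeval DR (sub2 (F.h a) (C l) (C m + X)) (F.Q0 m)
          - br l a (F.Q0 m) ∧
      sub2 F.P (C m) (C l + X) * sub2 (F.h a) (C l) X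
        = ev2 (F.h a) l (-l - m) • sub2 F.P (C (l + m)) X + sub2 (g (F.Dm l a)) (C m) X
          + sub2 (F.h a) (C l) (C m + X) * sub2 F.P (C m) X
          + sub2 (F.h (F.Dm l a)) (C (l + m)) X := by
  rw [JacobiAt, hF.xx, hF.rx, hF.apply_inl_mk hB, hF.apply_mk_gen hB, hF.apply_gen_mk hB,
    hx.mk_aeval_eq_add_iff]
  simp only [sub2_C_X_comp_X_add_C, eval_sub2_C_X, neg_add']
  exact and_congr (by grind) (by grind)

theorem jacobiAt_xxr_iff (l m : ℂ) (a : R) :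
    JacobiAt B l m (0, x) (0, x) (a, 0) ↔
      ev2 F.P l (-l - m) • F.Tm (l + m) a
        = F.Tm l (F.Tm m a) + aeval DR (sub2 (g a) (C m) (C l + X)) (F.Q0 l)
          - br (l + m) (F.Q0 l) a - F.Tm m (F.Tm l a)
          - aeval DR (sub2 (g a) (C l) (C m + X)) (F.Q0 m) ∧
      ev2 F.P l (-l - m) • sub2 (g a) (C (l + m)) X
        = sub2 (g (F.Tm m a)) (C l) X + sub2 (g a) (C m) (C l + X) * sub2 F.P (C l) X
          - sub2 (g (F.Tm l a)) (C m) X - sub2 (g a) (C l) (C m + X) * sub2 F.P (C m) X := by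
  rw [JacobiAt, hF.xx, hF.xr, hF.xr, hF.apply_mk_inl hB, hF.apply_gen_mk hB, hF.apply_gen_mk hB,
    hx.mk_aeval_eq_add_iff]
  simp only [sub2_C_X_comp_X_add_C, eval_sub2_C_X, neg_add']
  exact and_congr (by grind) (by grind)

theorem jacobiAt_xxx_iff (l m : ℂ) :
    JacobiAt B l m (0, x) (0, x) (0, x) ↔
      F.Tm l (F.Q0 m)
        = F.Dm (l + m) (F.Q0 l) + ev2 F.P l (-l - m) • F.Q0 (l + m) + F.Tm m (F.Q0 l)
          + aeval DR (sub2 F.P (C l) (C m + X)) (F.Q0 m)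
          - aeval DR (sub2 F.P (C m) (C l + X)) (F.Q0 l) ∧
      sub2 (g (F.Q0 m)) (C l) X
        = sub2 (F.h (F.Q0 l)) (C (l + m)) X + sub2 (g (F.Q0 l)) (C m) X
          + ev2 F.P l (-l - m) • sub2 F.P (C (l + m)) X
          + sub2 F.P (C l) (C m + X) * sub2 F.P (C m) X
          - sub2 F.P (C m) (C l + X) * sub2 F.P (C l) X := by
  rw [JacobiAt, hF.xx, hF.xx, hF.apply_mk_gen hB, hF.apply_gen_mk hB, hF.apply_gen_mk hB,
    hx.mk_aeval_eq_add_iff]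
  simp only [sub2_C_X_comp_X_add_C, eval_sub2_C_X, neg_add']
  exact and_congr (by grind) (by grind)

theorem jacobiAt_xrr_iff (hbr : IsConformalBilin DR DR DR br) {l m : ℂ} {a b : R}
    (h : JacobiAt B l m (a, 0) (0, x) (b, 0)) :
    JacobiAt B m l (0, x) (a, 0) (b, 0) ↔
      br (l + m) (F.Tm m a) b + br (l + m) (F.Dm l a) b
        + (ev2 (F.h a) l (-l - m) + ev2 (g a) m (-l - m)) • F.Tm (l + m) b = 0 ∧
      (ev2 (F.h a) l (-l - m) + ev2 (g a) m (-l - m)) • sub2 (g b) (C (l + m)) X = 0 := by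
  rw [h.swap_iff hB, hF.apply_gen_inl_add_apply_inl_gen, hF.apply_mk_inl hB,
    hx.mk_aeval_eq_zero_iff, hbr.add_left, eval_add, eval_sub2_C_X, eval_sub2_C_X, neg_add']

theorem jacobiAt_xrx_iff {l m : ℂ} {a : R} (h : JacobiAt B l m (a, 0) (0, x) (0, x)) :
    JacobiAt B m l (0, x) (a, 0) (0, x) ↔
      F.Dm (l + m) (F.Tm m a) + F.Dm (l + m) (F.Dm l a)
        + (ev2 (F.h a) l (-l - m) + ev2 (g a) m (-l - m)) • F.Q0 (l + m) = 0 ∧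
      (ev2 (F.h a) l (-l - m) + ev2 (g a) m (-l - m)) • sub2 F.P (C (l + m)) X
        + sub2 (F.h (F.Dm l a)) (C (l + m)) X + sub2 (F.h (F.Tm m a)) (C (l + m)) X = 0 := by
  rw [h.swap_iff hB, hF.apply_gen_inl_add_apply_inl_gen, hF.apply_mk_gen hB,
    hx.mk_aeval_eq_zero_iff, (F.Dm_lin _).map_add, eval_add, eval_sub2_C_X, eval_sub2_C_X,
    neg_add', map_add, sub2_add]
  exact and_congr_right fun _ => by grind

theorem isFlagDatum_of_jacobiAt (hbr : IsConformalBilin DR DR DR br)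
    (hJ : ∀ l m u v w, JacobiAt B l m u v w) : IsFlagDatum DR br F g where
  rrx_fst l m a b := ((hF.jacobiAt_rrx_iff hx hB l m a b).1 (hJ ..)).1
  rrx_snd l m a b := ((hF.jacobiAt_rrx_iff hx hB l m a b).1 (hJ ..)).2
  rxr_fst l m a b := ((hF.jacobiAt_rxr_iff hx hB l m a b).1 (hJ ..)).1
  rxr_snd l m a b := ((hF.jacobiAt_rxr_iff hx hB l m a b).1 (hJ ..)).2
  xrr_fst l m a b := ((hF.jacobiAt_xrr_iff hx hB hbr (hJ l m (a, 0) _ (b, 0))).1 (hJ ..)).1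
  xrr_snd l m a b := ((hF.jacobiAt_xrr_iff hx hB hbr (hJ l m (a, 0) _ (b, 0))).1 (hJ ..)).2
  rxx_fst l m a := ((hF.jacobiAt_rxx_iff hx hB l m a).1 (hJ ..)).1
  rxx_snd l m a := ((hF.jacobiAt_rxx_iff hx hB l m a).1 (hJ ..)).2
  xrx_fst l m a := ((hF.jacobiAt_xrx_iff hx hB (hJ l m (a, 0) _ _)).1 (hJ ..)).1
  xrx_snd l m a := ((hF.jacobiAt_xrx_iff hx hB (hJ l m (a, 0) _ _)).1 (hJ ..)).2
  xxr_fst l m a := ((hF.jacobiAt_xxr_iff hx hB l m a).1 (hJ ..)).1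
  xxr_snd l m a := ((hF.jacobiAt_xxr_iff hx hB l m a).1 (hJ ..)).2
  xxx_fst l m := ((hF.jacobiAt_xxx_iff hx hB l m).1 (hJ ..)).1
  xxx_snd l m := ((hF.jacobiAt_xxx_iff hx hB l m).1 (hJ ..)).2

theorem jacobiAt_of_isFlagDatum (hbr : IsLeibnizConformal DR br) (h : IsFlagDatum DR br F g)
    (l m : ℂ) (u v w : R × Q) : JacobiAt B l m u v w := by
  have rrr (l m : ℂ) (a b c : R) : JacobiAt B l m (a, 0) (b, 0) (c, 0) := by
    simp only [JacobiAt, hF.rr, hbr.jacobi l m a b c, Prod.mk_add_mk, add_zero]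
  have rrx (l m : ℂ) (a b : R) : JacobiAt B l m (a, 0) (b, 0) (0, x) :=
    (hF.jacobiAt_rrx_iff hx hB l m a b).2 ⟨h.rrx_fst l m a b, h.rrx_snd l m a b⟩
  have rxr (l m : ℂ) (a b : R) : JacobiAt B l m (a, 0) (0, x) (b, 0) :=
    (hF.jacobiAt_rxr_iff hx hB l m a b).2 ⟨h.rxr_fst l m a b, h.rxr_snd l m a b⟩
  have rxx (l m : ℂ) (a : R) : JacobiAt B l m (a, 0) (0, x) (0, x) :=
    (hF.jacobiAt_rxx_iff hx hB l m a).2 ⟨h.rxx_fst l m a, h.rxx_snd l m a⟩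
  have xrr (l m : ℂ) (a b : R) : JacobiAt B l m (0, x) (a, 0) (b, 0) :=
    (hF.jacobiAt_xrr_iff hx hB hbr.bilin (rxr m l a b)).2
      ⟨h.xrr_fst m l a b, h.xrr_snd m l a b⟩
  have xrx (l m : ℂ) (a : R) : JacobiAt B l m (0, x) (a, 0) (0, x) :=
    (hF.jacobiAt_xrx_iff hx hB (rxx m l a)).2 ⟨h.xrx_fst m l a, h.xrx_snd m l a⟩
  have xxr (l m : ℂ) (a : R) : JacobiAt B l m (0, x) (0, x) (a, 0) :=
    (hF.jacobiAt_xxr_iff hx hB l m a).2 ⟨h.xxr_fst l m a, h.xxr_snd l m a⟩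
  have xxx (l m : ℂ) : JacobiAt B l m (0, x) (0, x) (0, x) :=
    (hF.jacobiAt_xxx_iff hx hB l m).2 ⟨h.xxx_fst l m, h.xxx_snd l m⟩
  refine hB.jacobiAt_of_generates (generatesUnder_insert_range_inl DR hx.surjective) ?_ u v w
  rintro _ (rfl | ⟨a, rfl⟩) _ (rfl | ⟨b, rfl⟩) _ (rfl | ⟨c, rfl⟩)
  exacts [xxx l m, xxr l m c, xrx l m b, xrr l m b c, rxx l m a, rxr l m a c, rrx l m a b,
    rrr l m a b c]

end Jacobi

end HasFlagData

theorem exists_lcaOn_hasFlagData (hbr : IsLeibnizConformal DR br) (hx : IsFreeGenerator DQ x)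
    {F : FlagData R DR} {g : R →ₗ[ℂ] CPoly2} (hg : ∀ a, g (DR a) = (X + C X) * g a)
    (h : IsFlagDatum DR br F g) :
    ∃ A : LCAOn R Q DR DQ br, HasFlagData DR DQ br x A.brE F g := by
  have bilin := isConformalBilin_flagBracket hbr.bilin hx F hg
  have hF := hasFlagData_flagBracket hbr.bilin hx F g
  exact ⟨⟨_, ⟨bilin, hF.jacobiAt_of_isFlagDatum hx bilin hbr h⟩, hF.rr⟩, hF⟩

end FlagDatum

/-! ### The two kinds of flag data -/

section Kinds

variable {R Q : Type*} [AddCommGroup R] [Module ℂ R] [AddCommGroup Q] [Module ℂ Q]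
  {DR : Module.End ℂ R} {DQ : Module.End ℂ Q} {br : ℂ → R → R → R} {x : Q}
  {F : FlagData R DR} {g : R →ₗ[ℂ] CPoly2}

theorem ev2_add_ev2_negTwist (p : CPoly2) (l m : ℂ) :
    ev2 p l (-l - m) + ev2 (negTwist p) m (-l - m) = 0 := by
  rw [ev2_negTwist, show -m - (-l - m) = l by ring, add_neg_cancel]

theorem sub2_negTwist_left (p : CPoly2) (l m : ℂ) :
    sub2 (negTwist p) (C l) (C m + X) = -sub2 p (-C l - C m - X) (C m + X) := by
  rw [sub2_negTwist, sub_sub]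

theorem sub2_negTwist_right (p : CPoly2) (l m : ℂ) :
    sub2 (negTwist p) (C m) (C l + X) = -sub2 p (-C l - C m - X) (C l + X) := by
  rw [sub2_negTwist_left, neg_sub_comm (C m)]

theorem sub2_negTwist_add (p : CPoly2) (l m : ℂ) :
    sub2 (negTwist p) (C (l + m)) X = -sub2 p (-C l - C m - X) X := by
  rw [sub2_negTwist, C_add, neg_add']

theorem FlagData.negTwist_h_map (F : FlagData R DR) (a : R) :
    (negTwist ∘ₗ F.h) (DR a) = (X + C X) * (negTwist ∘ₗ F.h) a :=
  cpoly2_ext fun l => by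
    simp only [LinearMap.comp_apply, F.h_conf, sub2_negTwist, sub2_mul, sub2_add, sub2_neg, sub2_X,
      sub2_C, X_comp]
    ring

-- By `xrr_snd` the polynomials `g a` and `-(h a)(-λ-∂, ∂)` have the same value at every `(m, d)`
-- with `-d` outside the finite set of zeros of a nonzero `g b`.
theorem IsFlagDatum.eq_zero_or_eq_negTwist (h : IsFlagDatum DR br F g) :
    g = 0 ∨ g = negTwist ∘ₗ F.h := by
  refine or_iff_not_imp_left.2 fun hg => LinearMap.ext fun a => cpoly2_ext fun m => ?_
  obtain ⟨b, hb⟩ := DFunLike.ne_iff.1 hg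
  have finite_zeros := (finite_setOf_sub2_C_X_eq_zero hb).preimage neg_injective.injOn
  refine eq_of_infinite_eval_eq _ _ (finite_zeros.infinite_compl.mono fun d hd => ?_)
  have smul_eq_zero := h.xrr_snd (-d - m) m a b
  rw [sub_add_cancel, neg_sub', sub_neg_eq_add, neg_neg, add_sub_cancel_right] at smul_eq_zero
  have ev2_add_eq_zero := (_root_.smul_eq_zero.1 smul_eq_zero).resolve_right hd
  rw [Set.mem_ofPred_eq, eval_sub2_C_X, eval_sub2_C_X, LinearMap.comp_apply, ev2_negTwist,
    neg_sub_comm]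
  linear_combination ev2_add_eq_zero

theorem IsFlag1.isFlagDatum (h : IsFlag1 DR br F) : IsFlagDatum DR br F 0 := by
  obtain ⟨F1, F2, F3, F4, F5, F6, F7, F8, F9, F10, F11⟩ := h
  exact
    { rrx_fst := F2
      rrx_snd := F1
      rxr_fst := by simpa using F3
      rxr_snd := by simp
      xrr_fst := fun l m a b => by
        simp only [LinearMap.zero_apply, ev2_zero, add_zero]
        linear_combination (norm := module) F3 l m a b - F4 l m a b
      xrr_snd := by simp
      rxx_fst := F6
      rxx_snd := by simpa using F5
      xrx_fst := by simpa using F7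
      xrx_snd := by simpa using F8
      xxr_fst := by simpa using F9
      xxr_snd := by simp
      xxx_fst := F10
      xxx_snd := fun l m => by
        simp only [LinearMap.zero_apply, sub2_zero, add_zero]
        linear_combination (norm := module) -F11 l m }

theorem IsFlagDatum.isFlag1 (h : IsFlagDatum DR br F 0) : IsFlag1 DR br F := by
  have F3 (l m : ℂ) (a b : R) : F.Tm m (br l a b) = br l a (F.Tm m b) - br (l + m) (F.Dm l a) b
      - ev2 (F.h a) l (-l - m) • F.Tm (l + m) b := by
    simpa using h.rxr_fst l m a b
  refine ⟨h.rrx_snd, h.rrx_fst, F3, fun l m a b => ?_, by simpa using h.rxx_snd, h.rxx_fst,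
    by simpa using h.xrx_fst, by simpa using h.xrx_snd, by simpa using h.xxr_fst, h.xxx_fst,
    fun l m => ?_⟩
  · have xrr_fst := h.xrr_fst l m a b
    simp only [LinearMap.zero_apply, ev2_zero, add_zero] at xrr_fst
    linear_combination (norm := module) F3 l m a b - xrr_fst
  · have xxx_snd := h.xxx_snd l m
    simp only [LinearMap.zero_apply, sub2_zero, add_zero] at xxx_snd
    linear_combination (norm := module) -xxx_snd

theorem isFlag1_iff : IsFlag1 DR br F ↔ IsFlagDatum DR br F 0 :=
  ⟨IsFlag1.isFlagDatum, IsFlagDatum.isFlag1⟩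

-- Specializing `μ` to `-λ - μ - ∂` turns the identity at `(a, b, x)` into the one at `(a, x, b)`.
theorem negTwist_rxr_snd
    (rrx_snd : ∀ l m a b, sub2 (F.h (br l a b)) (C (l + m)) X
      = sub2 (F.h b) (C m) (C l + X) * sub2 (F.h a) (C l) X
        - sub2 (F.h a) (C l) (C m + X) * sub2 (F.h b) (C m) X) (l m : ℂ) (a b : R) :
    sub2 (negTwist (F.h (br l a b))) (C m) X
      = sub2 (negTwist (F.h b)) (C m) (C l + X) * sub2 (F.h a) (C l) X
        - ev2 (F.h a) l (-l - m) • sub2 (negTwist (F.h b)) (C (l + m)) X := by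
  refine Polynomial.funext fun d => ?_
  have eval_rrx_snd := congrArg (eval d) (rrx_snd l (-l - m - d) a b)
  simp only [sub2_negTwist, eval_neg, eval_sub, eval_mul, eval_smul, eval_sub2, eval_add, eval_C,
    eval_X, smul_eq_mul] at eval_rrx_snd ⊢
  ring_nf at eval_rrx_snd ⊢
  linear_combination -eval_rrx_snd

theorem IsFlag2.isFlagDatum (h : IsFlag2 DR br F) : IsFlagDatum DR br F (negTwist ∘ₗ F.h) := by
  obtain ⟨-, F1, F2, F6, F10, G1, G2, G3, G4, G5, G6, G7, G8⟩ := h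
  refine ⟨F2, F1, fun l m a b => ?_, negTwist_rxr_snd F1, fun l m a b => ?_, fun l m a b => ?_,
    F6, fun l m a => ?_, fun l m a => ?_, fun l m a => ?_, fun l m a => ?_, fun l m a => ?_,
    F10, fun l m => ?_⟩ <;>
  simp only [LinearMap.comp_apply, ev2_add_ev2_negTwist, zero_smul, add_zero, zero_add]
  · rw [sub2_negTwist_right, map_neg, LinearMap.neg_apply, ← sub_eq_add_neg]
    exact G1 l m a b
  · exact G2 l m a b
  · rw [sub2_negTwist, ← sub_eq_add_neg]
    exact G3 l m a
  · exact G4 l m a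
  · exact G5 l m a
  · rw [sub2_negTwist_right, sub2_negTwist_left, map_neg, map_neg, LinearMap.neg_apply,
      LinearMap.neg_apply, ← sub_eq_add_neg, sub_neg_eq_add]
    exact G6 l m a
  · rw [sub2_negTwist_right, sub2_negTwist_left, sub2_negTwist_add, sub2_negTwist, sub2_negTwist,
      smul_neg, neg_mul, neg_mul]
    linear_combination (norm := module) -G7 l m a
  · rw [sub2_negTwist, sub2_negTwist, ← sub_eq_add_neg]
    exact G8 l m

theorem IsFlagDatum.isFlag2 (hne : F.h ≠ 0) (h : IsFlagDatum DR br F (negTwist ∘ₗ F.h)) :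
    IsFlag2 DR br F := by
  obtain ⟨F2, F1, rxr_fst, -, xrr_fst, -, F6, rxx_snd, xrx_fst, xrx_snd, xxr_fst, xxr_snd, F10,
    xxx_snd⟩ := h
  simp only [LinearMap.comp_apply, ev2_add_ev2_negTwist, zero_smul, add_zero, zero_add]
    at rxr_fst xrr_fst rxx_snd xrx_fst xrx_snd xxr_fst xxr_snd xxx_snd
  refine ⟨hne, F1, F2, F6, F10, fun l m a b => ?_, xrr_fst, fun l m a => ?_, xrx_fst, xrx_snd,
    fun l m a => ?_, fun l m a => ?_, fun l m => ?_⟩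
  · rw [rxr_fst, sub2_negTwist_right, map_neg, LinearMap.neg_apply, ← sub_eq_add_neg]
  · rw [rxx_snd, sub2_negTwist, ← sub_eq_add_neg]
  · rw [xxr_fst, sub2_negTwist_right, sub2_negTwist_left, map_neg, map_neg, LinearMap.neg_apply,
      LinearMap.neg_apply, ← sub_eq_add_neg, sub_neg_eq_add]
  · have xxr_snd_eq := xxr_snd l m a
    rw [sub2_negTwist_right, sub2_negTwist_left, sub2_negTwist_add, sub2_negTwist, sub2_negTwist,
      smul_neg, neg_mul, neg_mul] at xxr_snd_eq
    linear_combination (norm := module) -xxr_snd_eq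
  · rw [← sub2_negTwist, xxx_snd, sub2_negTwist, ← sub_eq_add_neg]

theorem isFlag2_iff :
    IsFlag2 DR br F ↔ F.h ≠ 0 ∧ IsFlagDatum DR br F (negTwist ∘ₗ F.h) :=
  ⟨fun h => ⟨h.1, h.isFlagDatum⟩, fun h => h.2.isFlag2 h.1⟩

theorem isFC1Of_iff {A : LCAOn R Q DR DQ br} :
    IsFC1Of DR DQ br x F A ↔ HasFlagData DR DQ br x A.brE F 0 := by
  constructor
  · rintro ⟨rx, xr, xx⟩
    exact ⟨A.sub, rx, by simpa using xr, xx⟩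
  · rintro ⟨-, rx, xr, xx⟩
    exact ⟨rx, by simpa using xr, xx⟩

theorem isFC2Of_iff {A : LCAOn R Q DR DQ br} :
    IsFC2Of DR DQ br x F A ↔ HasFlagData DR DQ br x A.brE F (negTwist ∘ₗ F.h) := by
  constructor
  · rintro ⟨rx, xr, xx⟩
    exact ⟨A.sub, rx, by simpa [sub2_negTwist] using xr, xx⟩
  · rintro ⟨-, rx, xr, xx⟩
    exact ⟨rx, by simpa [sub2_negTwist] using xr, xx⟩

end Kinds

/-! ### Isomorphisms stabilizing `R` -/

section Isomorphisms

variable {R Q : Type*} [AddCommGroup R] [Module ℂ R] [AddCommGroup Q] [Module ℂ Q]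
  {DR : Module.End ℂ R} {DQ : Module.End ℂ Q} {br : ℂ → R → R → R} {x : Q}
  {F F' : FlagData R DR} {g g' : R →ₗ[ℂ] CPoly2} {u : R} {β : ℂ}

/-- The common form of the relations `≡₁` and `≡₂` via `(u, β)`, for the data `(F, g)` and
`(F', g')` of `HasFlagData`: `g = 0` gives `≡₁` and `g = -h_{-λ-∂}` gives `≡₂`. -/
structure FlagRelVia (DR : Module.End ℂ R) (br : ℂ → R → R → R) (F : FlagData R DR)
    (g : R →ₗ[ℂ] CPoly2) (F' : FlagData R DR) (g' : R →ₗ[ℂ] CPoly2) (u : R) (β : ℂ) : Prop where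
  h_eq : F.h = F'.h
  g_eq : g = g'
  Dm_eq : ∀ l a, F.Dm l a = br l a u + β • F'.Dm l a - aeval DR (sub2 (F.h a) (C l) X) u
  Tm_eq : ∀ l a, F.Tm l a = br l u a + β • F'.Tm l a - aeval DR (sub2 (g a) (C l) X) u
  P_eq : F.P = F'.h u + g' u + β • F'.P
  Q0_eq : ∀ l, F.Q0 l = br l u u + β • F'.Dm l u + β • F'.Tm l u + β ^ 2 • F'.Q0 l
    - aeval DR (sub2 F.P (C l) X) u

theorem flagRel1Via_iff : FlagRel1Via DR br F F' u β ↔ FlagRelVia DR br F 0 F' 0 u β := by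
  constructor
  · rintro ⟨h_eq, Dm_eq, Tm_eq, P_eq, Q0_eq⟩
    exact ⟨h_eq, rfl, Dm_eq, by simpa using Tm_eq, by simpa using P_eq, Q0_eq⟩
  · rintro ⟨h_eq, -, Dm_eq, Tm_eq, P_eq, Q0_eq⟩
    exact ⟨h_eq, Dm_eq, by simpa using Tm_eq, by simpa using P_eq, Q0_eq⟩

theorem flagRel2Via_iff : FlagRel2Via DR br F F' u β ↔
    FlagRelVia DR br F (negTwist ∘ₗ F.h) F' (negTwist ∘ₗ F'.h) u β := by
  constructor
  · rintro ⟨h_eq, Dm_eq, Tm_eq, P_eq, Q0_eq⟩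
    exact ⟨h_eq, by rw [h_eq], Dm_eq, by simpa [sub2_negTwist] using Tm_eq,
      by rw [P_eq, LinearMap.comp_apply, negTwist_apply, sub_eq_add_neg], Q0_eq⟩
  · rintro ⟨h_eq, -, Dm_eq, Tm_eq, P_eq, Q0_eq⟩
    exact ⟨h_eq, Dm_eq, by simpa [sub2_negTwist] using Tm_eq,
      by rw [P_eq, LinearMap.comp_apply, negTwist_apply, sub_eq_add_neg], Q0_eq⟩

/-- The `ℂ[∂]`-linear map `(a, p x) ↦ (a + p u, β p x)` on `R ⊕ ℂ[∂]x`. -/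
def shear (hx : IsFreeGenerator DQ x) (DR : Module.End ℂ R) (u : R) (β : ℂ) :
    R × Q →ₗ[ℂ] R × Q :=
  (LinearMap.fst ℂ R Q
    + LinearMap.applyₗ u ∘ₗ (aeval DR).toLinearMap ∘ₗ hx.coord ∘ₗ LinearMap.snd ℂ R Q).prod
    (β • LinearMap.snd ℂ R Q)

section Shear

variable (hx : IsFreeGenerator DQ x)

theorem shear_apply (a : R) (q : Q) :
    shear hx DR u β (a, q) = (a + aeval DR (hx.coord q) u, β • q) :=
  rfl

theorem shear_apply_inl (a : R) : shear hx DR u β (a, 0) = (a, 0) := by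
  simp [shear_apply]

theorem shear_apply_gen : shear hx DR u β (0, x) = (u, aeval DQ (C β) x) := by
  simp [shear_apply, hx.coord_self]

theorem shear_apply_mk_aeval (a : R) (p : ℂ[X]) :
    shear hx DR u β (a, aeval DQ p x) = (a + aeval DR p u, aeval DQ (C β * p) x) := by
  have coord_aeval : hx.coord (aeval DQ p x) = p := hx.injective (hx.aeval_coord _)
  simp [shear_apply, coord_aeval]

theorem preservesD_shear : PreservesD (DR.prodMap DQ) (shear hx DR u β) := by
  rintro ⟨a, q⟩
  simp [shear_apply, hx.coord_map]

theorem bijective_shear (hβ : β ≠ 0) : Function.Bijective (shear hx DR u β) := by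
  refine Function.bijective_iff_has_inverse.2
    ⟨fun v => (v.1 - aeval DR (hx.coord (β⁻¹ • v.2)) u, β⁻¹ • v.2), fun ⟨a, q⟩ => ?_, fun v => ?_⟩
  · simp [shear_apply, hβ]
  · simp [shear_apply, hβ]

theorem coStabilizesSnd_shear_iff : CoStabilizesSnd (shear hx DR u β) ↔ β = 1 := by
  refine ⟨fun h => ?_, ?_⟩
  · have aeval_C_eq : aeval DQ (C β) x = aeval DQ (C (1 : ℂ)) x := by
      simpa [shear_apply] using h (0, x)
    exact C_injective (hx.injective aeval_C_eq)
  · rintro rfl ⟨a, q⟩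
    simp [shear_apply]

-- The `Q`-part of `φ (0, x)` is `q x` with `q` invertible, since `φ` is onto, and the units of
-- `ℂ[∂]` are the nonzero scalars.
theorem exists_eq_shear {φ : R × Q →ₗ[ℂ] R × Q} (hφ : Function.Surjective φ)
    (hD : PreservesD (DR.prodMap DQ) φ) (hR : StabilizesFst φ) :
    ∃ (u : R) (β : ℂ), β ≠ 0 ∧ φ = shear hx DR u β := by
  obtain ⟨q, hq⟩ := hx.surjective (φ (0, x)).2
  have apply_mk_aeval (a : R) (p : ℂ[X]) :
      φ (a, aeval DQ p x) = (a + aeval DR p (φ (0, x)).1, aeval DQ (p * q) x) := by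
    rw [mk_aeval_eq_add_aeval DR, map_add, hR a, map_aeval_of_intertwines φ.isLinear hD,
      aeval_prodMap, ← hq]
    simp
  obtain ⟨⟨a, r⟩, hr⟩ := hφ (0, x)
  obtain ⟨p, rfl⟩ := hx.surjective r
  rw [apply_mk_aeval] at hr
  have mul_eq_one : p * q = 1 := hx.injective (by simpa using congrArg Prod.snd hr)
  obtain ⟨β, hβ, rfl⟩ := isUnit_iff.1 (IsUnit.of_mul_eq_one_right p mul_eq_one)
  refine ⟨(φ (0, x)).1, β, hβ.ne_zero, LinearMap.ext ?_⟩
  rintro ⟨b, r⟩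
  obtain ⟨s, rfl⟩ := hx.surjective r
  rw [apply_mk_aeval, shear_apply_mk_aeval, mul_comm s]

end Shear

section BracketHom

variable {B B' : ℂ → R × Q → R × Q → R × Q} (hx : IsFreeGenerator DQ x)
  (hB' : IsConformalBilin (DR.prodMap DQ) (DR.prodMap DQ) (DR.prodMap DQ) B')
  (hF : HasFlagData DR DQ br x B F g) (hF' : HasFlagData DR DQ br x B' F' g') (hβ : β ≠ 0)

include hF hF' in
theorem shear_apply_rr (l : ℂ) (a b : R) :
    shear hx DR u β (B l (a, 0) (b, 0))
      = B' l (shear hx DR u β (a, 0)) (shear hx DR u β (b, 0)) := by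
  rw [hF.rr, shear_apply_inl, shear_apply_inl, shear_apply_inl, hF'.rr]

include hB' hF hF' hβ

theorem shear_apply_rx_iff (l : ℂ) (a : R) :
    shear hx DR u β (B l (a, 0) (0, x))
        = B' l (shear hx DR u β (a, 0)) (shear hx DR u β (0, x)) ↔
      F.Dm l a = br l a u + β • F'.Dm l a - aeval DR (sub2 (F.h a) (C l) X) u ∧
      sub2 (F.h a) (C l) X = sub2 (F'.h a) (C l) X := by
  rw [hF.rx, shear_apply_mk_aeval, shear_apply_inl, shear_apply_gen, hF'.apply_inl_mk hB',
    hx.mk_aeval_eq_iff, eq_sub_iff_add_eq]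
  simp [hβ]

theorem shear_apply_xr_iff (l : ℂ) (a : R) :
    shear hx DR u β (B l (0, x) (a, 0))
        = B' l (shear hx DR u β (0, x)) (shear hx DR u β (a, 0)) ↔
      F.Tm l a = br l u a + β • F'.Tm l a - aeval DR (sub2 (g a) (C l) X) u ∧
      sub2 (g a) (C l) X = sub2 (g' a) (C l) X := by
  rw [hF.xr, shear_apply_mk_aeval, shear_apply_inl, shear_apply_gen, hF'.apply_mk_inl hB',
    hx.mk_aeval_eq_iff, eq_sub_iff_add_eq, smul_eq_C_mul, eval_C]
  simp [hβ]

theorem shear_apply_xx_iff (l : ℂ) :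
    shear hx DR u β (B l (0, x) (0, x))
        = B' l (shear hx DR u β (0, x)) (shear hx DR u β (0, x)) ↔
      F.Q0 l = br l u u + β • F'.Dm l u + β • F'.Tm l u + β ^ 2 • F'.Q0 l
        - aeval DR (sub2 F.P (C l) X) u ∧
      sub2 F.P (C l) X = sub2 (F'.h u + g' u + β • F'.P) (C l) X := by
  have apply_mk_mk : B' l (u, aeval DQ (C β) x) (u, aeval DQ (C β) x)
      = (br l u u + β • F'.Dm l u + β • F'.Tm l u + β ^ 2 • F'.Q0 l,
        aeval DQ (C β * sub2 (F'.h u + g' u + β • F'.P) (C l) X) x) := by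
    nth_rw 2 [mk_aeval_eq_add_aeval DR]
    rw [hB'.add_right, hB'.aeval_right, C_comp, hF'.apply_mk_inl hB', hF'.apply_mk_gen hB',
      aeval_C, Module.algebraMap_end_apply]
    ext
    · simp only [Prod.fst_add, Prod.smul_fst, eval_C]
      module
    · simp only [Prod.snd_add, Prod.smul_snd, eval_C, sub2_add, sub2_smul, C_mul', map_add,
        map_smul, LinearMap.add_apply, LinearMap.smul_apply]
      module
  rw [hF.xx, shear_apply_mk_aeval, shear_apply_gen, apply_mk_mk, hx.mk_aeval_eq_iff,
    eq_sub_iff_add_eq]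
  simp [hβ]

theorem FlagRelVia.of_isBracketHom_shear (h : IsBracketHom B B' (shear hx DR u β)) :
    FlagRelVia DR br F g F' g' u β where
  h_eq := LinearMap.ext fun a => cpoly2_ext fun l =>
    ((shear_apply_rx_iff hx hB' hF hF' hβ l a).1 (h ..)).2
  g_eq := LinearMap.ext fun a => cpoly2_ext fun l =>
    ((shear_apply_xr_iff hx hB' hF hF' hβ l a).1 (h ..)).2
  Dm_eq l a := ((shear_apply_rx_iff hx hB' hF hF' hβ l a).1 (h ..)).1
  Tm_eq l a := ((shear_apply_xr_iff hx hB' hF hF' hβ l a).1 (h ..)).1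
  P_eq := cpoly2_ext fun l => ((shear_apply_xx_iff hx hB' hF hF' hβ l).1 (h ..)).2
  Q0_eq l := ((shear_apply_xx_iff hx hB' hF hF' hβ l).1 (h ..)).1

theorem FlagRelVia.isBracketHom_shear
    (hB : IsConformalBilin (DR.prodMap DQ) (DR.prodMap DQ) (DR.prodMap DQ) B)
    (h : FlagRelVia DR br F g F' g' u β) : IsBracketHom B B' (shear hx DR u β) := by
  have hD : PreservesD (DR.prodMap DQ) (shear hx DR u β) := preservesD_shear hx
  have generates := generatesUnder_insert_range_inl DR hx.surjective
  intro l v w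
  refine (hB.comp LinearMap.id LinearMap.id (shear hx DR u β) (DU' := DR.prodMap DQ)
    (DV' := DR.prodMap DQ) (DW' := DR.prodMap DQ) (fun _ => rfl) (fun _ => rfl) hD).ext_of_generates
    (hB'.comp (shear hx DR u β) (shear hx DR u β) LinearMap.id hD hD fun _ => rfl)
    generates generates ?_ v w
  rintro _ (rfl | ⟨a, rfl⟩) _ (rfl | ⟨b, rfl⟩)
  · exact (shear_apply_xx_iff hx hB' hF hF' hβ l).2 ⟨h.Q0_eq l, by rw [h.P_eq]⟩
  · exact (shear_apply_xr_iff hx hB' hF hF' hβ l b).2 ⟨h.Tm_eq l b, by rw [h.g_eq]⟩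
  · exact (shear_apply_rx_iff hx hB' hF hF' hβ l a).2 ⟨h.Dm_eq l a, by rw [h.h_eq]⟩
  · exact shear_apply_rr hx hF hF' l a b

end BracketHom

variable {A A' A'' : LCAOn R Q DR DQ br} {φ φ' : R × Q →ₗ[ℂ] R × Q}

theorem lcaEquiv_iff (hx : IsFreeGenerator DQ x) (hF : HasFlagData DR DQ br x A.brE F g)
    (hF' : HasFlagData DR DQ br x A'.brE F' g') :
    lcaEquiv DR DQ br A A' ↔ ∃ u β, β ≠ 0 ∧ FlagRelVia DR br F g F' g' u β := by
  constructor
  · rintro ⟨φ, hφ, hD, hom, hR⟩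
    obtain ⟨u, β, hβ, rfl⟩ := exists_eq_shear hx hφ.surjective hD hR
    exact ⟨u, β, hβ, .of_isBracketHom_shear hx A'.leib.bilin hF hF' hβ hom⟩
  · rintro ⟨u, β, hβ, h⟩
    exact ⟨shear hx DR u β, bijective_shear hx hβ, preservesD_shear hx,
      h.isBracketHom_shear hx A'.leib.bilin hF hF' hβ A.leib.bilin, shear_apply_inl hx⟩

theorem lcaCohom_iff (hx : IsFreeGenerator DQ x) (hF : HasFlagData DR DQ br x A.brE F g)
    (hF' : HasFlagData DR DQ br x A'.brE F' g') :
    lcaCohom DR DQ br A A' ↔ ∃ u, FlagRelVia DR br F g F' g' u 1 := by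
  constructor
  · rintro ⟨φ, hφ, hD, hom, hR, hQ⟩
    obtain ⟨u, β, -, rfl⟩ := exists_eq_shear hx hφ.surjective hD hR
    obtain rfl := (coStabilizesSnd_shear_iff hx).1 hQ
    exact ⟨u, .of_isBracketHom_shear hx A'.leib.bilin hF hF' one_ne_zero hom⟩
  · rintro ⟨u, h⟩
    exact ⟨shear hx DR u 1, bijective_shear hx one_ne_zero, preservesD_shear hx,
      h.isBracketHom_shear hx A'.leib.bilin hF hF' one_ne_zero A.leib.bilin, shear_apply_inl hx,
      (coStabilizesSnd_shear_iff hx).2 rfl⟩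

/-- `φ` is an isomorphism of Leibniz conformal algebras `A → A'` stabilizing `R`. -/
def IsStabilizingIso (A A' : LCAOn R Q DR DQ br) (φ : R × Q →ₗ[ℂ] R × Q) : Prop :=
  Function.Bijective φ ∧ PreservesD (DR.prodMap DQ) φ ∧ IsBracketHom A.brE A'.brE φ ∧
    StabilizesFst φ

namespace IsStabilizingIso

theorem refl (A : LCAOn R Q DR DQ br) : IsStabilizingIso A A LinearMap.id :=
  ⟨Function.bijective_id, fun _ => rfl, fun _ _ _ => rfl, fun _ => rfl⟩

theorem symm (h : IsStabilizingIso A A' φ) :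
    IsStabilizingIso A' A (LinearEquiv.ofBijective φ h.1).symm := by
  obtain ⟨hφ, hD, hom, hR⟩ := h
  have apply_symm (v : R × Q) : φ ((LinearEquiv.ofBijective φ hφ).symm v) = v :=
    (LinearEquiv.ofBijective φ hφ).apply_symm_apply v
  refine ⟨LinearEquiv.bijective _, fun v => hφ.injective ?_, fun l v w => hφ.injective ?_,
    fun a => hφ.injective ?_⟩
  · rw [LinearEquiv.coe_coe, apply_symm, hD, apply_symm]
  · rw [LinearEquiv.coe_coe, apply_symm, hom, apply_symm, apply_symm]
  · rw [LinearEquiv.coe_coe, apply_symm, hR]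

theorem trans (h : IsStabilizingIso A A' φ) (h' : IsStabilizingIso A' A'' φ') :
    IsStabilizingIso A A'' (φ' ∘ₗ φ) := by
  obtain ⟨hφ, hD, hom, hR⟩ := h
  obtain ⟨hφ', hD', hom', hR'⟩ := h'
  refine ⟨hφ'.comp hφ, fun v => ?_, fun l v w => ?_, fun a => ?_⟩ <;>
  simp only [LinearMap.comp_apply]
  · rw [hD, hD']
  · rw [hom, hom']
  · rw [hR, hR']

end IsStabilizingIso

theorem equivalence_lcaEquiv : Equivalence (lcaEquiv DR DQ br) where
  refl A := ⟨_, IsStabilizingIso.refl A⟩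
  symm := fun ⟨_, h⟩ => ⟨_, IsStabilizingIso.symm h⟩
  trans := fun ⟨_, h⟩ ⟨_, h'⟩ => ⟨_, IsStabilizingIso.trans h h'⟩

theorem lcaCohom_iff_exists_isStabilizingIso :
    lcaCohom DR DQ br A A' ↔ ∃ φ, IsStabilizingIso A A' φ ∧ CoStabilizesSnd φ := by
  simp only [lcaCohom, IsStabilizingIso, and_assoc]

theorem equivalence_lcaCohom : Equivalence (lcaCohom DR DQ br) where
  refl A := lcaCohom_iff_exists_isStabilizingIso.2 ⟨_, .refl A, fun _ => rfl⟩
  symm h := by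
    obtain ⟨φ, h, hQ⟩ := lcaCohom_iff_exists_isStabilizingIso.1 h
    refine lcaCohom_iff_exists_isStabilizingIso.2 ⟨_, h.symm, fun v => ?_⟩
    simpa using (hQ ((LinearEquiv.ofBijective φ h.1).symm v)).symm
  trans h h' := by
    obtain ⟨φ, h, hQ⟩ := lcaCohom_iff_exists_isStabilizingIso.1 h
    obtain ⟨φ', h', hQ'⟩ := lcaCohom_iff_exists_isStabilizingIso.1 h'
    exact lcaCohom_iff_exists_isStabilizingIso.2
      ⟨_, h.trans h', fun v => (hQ' (φ v)).trans (hQ v)⟩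

end Isomorphisms

/-! ### Classification -/

theorem exists_injective_quot {S L : Type*} {r : S → S → Prop} {rel : L → L → Prop}
    (hrel : Equivalence rel) {P : S → L → Prop} (hP : ∀ s, ∃ A, P s A)
    (hr : ∀ {s s' A A'}, P s A → P s' A' → (rel A A' ↔ r s s')) :
    ∃ G : Quot r → Quot rel, Function.Injective G ∧
      ∀ s A, P s A → G (Quot.mk r s) = Quot.mk rel A := by
  choose A hA using hP
  refine ⟨Quot.lift (fun s => Quot.mk rel (A s)) fun s s' h => Quot.sound ((hr (hA s) (hA s')).2 h),
    ?_, fun s B hB => Quot.sound ?_⟩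
  · rintro ⟨s⟩ ⟨s'⟩ h
    exact Quot.sound ((hr (hA s) (hA s')).1 (hrel.eqvGen_iff.1 (Quot.eqvGen_exact h)))
  · have r_self : r s s := (hr hB hB).1 (hrel.refl B)
    exact (hr (hA s) hB).2 r_self

theorem exists_bijective_quot_sum {S₁ S₂ L : Type*} {r₁ : S₁ → S₁ → Prop} {r₂ : S₂ → S₂ → Prop}
    {rel : L → L → Prop} (hrel : Equivalence rel) {P₁ : S₁ → L → Prop} {P₂ : S₂ → L → Prop}
    (hP₁ : ∀ s, ∃ A, P₁ s A) (hP₂ : ∀ s, ∃ A, P₂ s A)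
    (hr₁ : ∀ {s s' A A'}, P₁ s A → P₁ s' A' → (rel A A' ↔ r₁ s s'))
    (hr₂ : ∀ {s s' A A'}, P₂ s A → P₂ s' A' → (rel A A' ↔ r₂ s s'))
    (hdisj : ∀ {s s' A A'}, P₁ s A → P₂ s' A' → ¬ rel A A')
    (hcover : ∀ A, (∃ s, P₁ s A) ∨ ∃ s, P₂ s A) :
    ∃ G : Quot r₁ ⊕ Quot r₂ → Quot rel, Function.Bijective G ∧
      (∀ s A, P₁ s A → G (Sum.inl (Quot.mk r₁ s)) = Quot.mk rel A) ∧
      (∀ s A, P₂ s A → G (Sum.inr (Quot.mk r₂ s)) = Quot.mk rel A) := by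
  obtain ⟨G₁, hG₁, G₁_mk⟩ := exists_injective_quot hrel hP₁ hr₁
  obtain ⟨G₂, hG₂, G₂_mk⟩ := exists_injective_quot hrel hP₂ hr₂
  refine ⟨Sum.elim G₁ G₂, ⟨hG₁.sumElim hG₂ ?_, ?_⟩, G₁_mk, G₂_mk⟩
  · rintro ⟨s⟩ ⟨s'⟩ h
    obtain ⟨A, hA⟩ := hP₁ s
    obtain ⟨A', hA'⟩ := hP₂ s'
    have mk_eq : Quot.mk rel A = Quot.mk rel A' :=
      (G₁_mk s A hA).symm.trans (h.trans (G₂_mk s' A' hA'))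
    exact hdisj hA hA' (hrel.eqvGen_iff.1 (Quot.eqvGen_exact mk_eq))
  · rintro ⟨A⟩
    rcases hcover A with ⟨s, hA⟩ | ⟨s, hA⟩
    · exact ⟨Sum.inl (Quot.mk r₁ s), G₁_mk s A hA⟩
    · exact ⟨Sum.inr (Quot.mk r₂ s), G₂_mk s A hA⟩

section Classification

variable {R Q : Type*} [AddCommGroup R] [Module ℂ R] [AddCommGroup Q] [Module ℂ Q]
  {DR : Module.End ℂ R} {DQ : Module.End ℂ Q} {br : ℂ → R → R → R} {x : Q}

theorem exists_isFC1Of (hbr : IsLeibnizConformal DR br) (hx : IsFreeGenerator DQ x)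
    (s : {F : FlagData R DR // IsFlag1 DR br F}) :
    ∃ A : LCAOn R Q DR DQ br, IsFC1Of DR DQ br x s.1 A :=
  (exists_lcaOn_hasFlagData hbr hx (by simp) (isFlag1_iff.1 s.2)).imp fun _ => isFC1Of_iff.2

theorem exists_isFC2Of (hbr : IsLeibnizConformal DR br) (hx : IsFreeGenerator DQ x)
    (s : {F : FlagData R DR // IsFlag2 DR br F}) :
    ∃ A : LCAOn R Q DR DQ br, IsFC2Of DR DQ br x s.1 A :=
  (exists_lcaOn_hasFlagData hbr hx s.1.negTwist_h_map (isFlag2_iff.1 s.2).2).imp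
    fun _ => isFC2Of_iff.2

theorem exists_isFC1Of_or_exists_isFC2Of (hbr : IsLeibnizConformal DR br)
    (hx : IsFreeGenerator DQ x) (A : LCAOn R Q DR DQ br) :
    (∃ s : {F : FlagData R DR // IsFlag1 DR br F}, IsFC1Of DR DQ br x s.1 A) ∨
      ∃ s : {F : FlagData R DR // IsFlag2 DR br F}, IsFC2Of DR DQ br x s.1 A := by
  obtain ⟨F, g, hF⟩ := exists_hasFlagData hx A.leib.bilin A.sub
  have datum : IsFlagDatum DR br F g :=
    hF.isFlagDatum_of_jacobiAt hx A.leib.bilin hbr.bilin A.leib.jacobi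
  by_cases hg : g = 0
  · subst hg
    exact Or.inl ⟨⟨F, isFlag1_iff.2 datum⟩, isFC1Of_iff.2 hF⟩
  · obtain rfl := datum.eq_zero_or_eq_negTwist.resolve_left hg
    have h_ne_zero : F.h ≠ 0 := fun h => hg (by rw [h, LinearMap.comp_zero])
    exact Or.inr ⟨⟨F, isFlag2_iff.2 ⟨h_ne_zero, datum⟩⟩, isFC2Of_iff.2 hF⟩

theorem negTwist_comp_ne_zero {h : R →ₗ[ℂ] CPoly2} (hh : h ≠ 0) : negTwist ∘ₗ h ≠ 0 := fun hzero =>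
  hh (LinearMap.ext fun a => negTwist_involutive.injective
    ((LinearMap.congr_fun hzero a).trans (map_zero negTwist).symm))

theorem exists_bijective_quot_lcaOn (hbr : IsLeibnizConformal DR br) (hx : IsFreeGenerator DQ x)
    {rel : LCAOn R Q DR DQ br → LCAOn R Q DR DQ br → Prop} (hrel : Equivalence rel)
    {frel : FlagData R DR → (R →ₗ[ℂ] CPoly2) → FlagData R DR → (R →ₗ[ℂ] CPoly2) → Prop}
    (hfrel : ∀ {A A' F F' g g'}, HasFlagData DR DQ br x A.brE F g →
      HasFlagData DR DQ br x A'.brE F' g' → (rel A A' ↔ frel F g F' g'))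
    (hg : ∀ {F F' g g'}, frel F g F' g' → g = g')
    {r₁ : {F : FlagData R DR // IsFlag1 DR br F} → {F // IsFlag1 DR br F} → Prop}
    {r₂ : {F : FlagData R DR // IsFlag2 DR br F} → {F // IsFlag2 DR br F} → Prop}
    (hr₁ : ∀ s s', r₁ s s' ↔ frel s.1 0 s'.1 0)
    (hr₂ : ∀ s s', r₂ s s' ↔ frel s.1 (negTwist ∘ₗ s.1.h) s'.1 (negTwist ∘ₗ s'.1.h)) :
    ∃ G : Quot r₁ ⊕ Quot r₂ → Quot rel, Function.Bijective G ∧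
      (∀ (s : {F : FlagData R DR // IsFlag1 DR br F}) (A : LCAOn R Q DR DQ br),
        IsFC1Of DR DQ br x s.1 A → G (Sum.inl (Quot.mk _ s)) = Quot.mk _ A) ∧
      (∀ (s : {F : FlagData R DR // IsFlag2 DR br F}) (A : LCAOn R Q DR DQ br),
        IsFC2Of DR DQ br x s.1 A → G (Sum.inr (Quot.mk _ s)) = Quot.mk _ A) := by
  refine exists_bijective_quot_sum hrel (exists_isFC1Of hbr hx) (exists_isFC2Of hbr hx)
    (fun h h' => (hfrel (isFC1Of_iff.1 h) (isFC1Of_iff.1 h')).trans (hr₁ _ _).symm)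
    (fun h h' => (hfrel (isFC2Of_iff.1 h) (isFC2Of_iff.1 h')).trans (hr₂ _ _).symm)
    (fun {s s' A A'} h h' hAA' => ?_) (exists_isFC1Of_or_exists_isFC2Of hbr hx)
  have zero_eq : 0 = negTwist ∘ₗ s'.1.h :=
    hg ((hfrel (isFC1Of_iff.1 h) (isFC2Of_iff.1 h')).1 hAA')
  exact negTwist_comp_ne_zero s'.2.1 zero_eq.symm

end Classification

theorem cextd_classification_rank_one_general
    {R Q : Type*} [AddCommGroup R] [Module ℂ R] [AddCommGroup Q] [Module ℂ Q]
    {DR : Module.End ℂ R} {DQ : Module.End ℂ Q}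
    {br : ℂ → R → R → R} (hbr : IsLeibnizConformal DR br)
    {x : Q} (hx : IsFreeGenerator DQ x) :
    (∀ s : {F : FlagData R DR // IsFlag1 DR br F},
      ∃ A : LCAOn R Q DR DQ br, IsFC1Of DR DQ br x s.1 A) ∧
    (∀ s : {F : FlagData R DR // IsFlag2 DR br F},
      ∃ A : LCAOn R Q DR DQ br, IsFC2Of DR DQ br x s.1 A) ∧
    (∃ G : Quot (fun s s' : {F : FlagData R DR // IsFlag1 DR br F} =>
              ∃ (u₀ : R) (β : ℂ), β ≠ 0 ∧ FlagRel1Via DR br s.1 s'.1 u₀ β) ⊕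
           Quot (fun s s' : {F : FlagData R DR // IsFlag2 DR br F} =>
              ∃ (u₀ : R) (β : ℂ), β ≠ 0 ∧ FlagRel2Via DR br s.1 s'.1 u₀ β) →
           Quot (lcaEquiv DR DQ br),
      Function.Bijective G ∧
      (∀ (s : {F : FlagData R DR // IsFlag1 DR br F}) (A : LCAOn R Q DR DQ br),
        IsFC1Of DR DQ br x s.1 A → G (Sum.inl (Quot.mk _ s)) = Quot.mk _ A) ∧
      (∀ (s : {F : FlagData R DR // IsFlag2 DR br F}) (A : LCAOn R Q DR DQ br),
        IsFC2Of DR DQ br x s.1 A → G (Sum.inr (Quot.mk _ s)) = Quot.mk _ A)) ∧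
    (∃ G : Quot (fun s s' : {F : FlagData R DR // IsFlag1 DR br F} =>
              ∃ u₀ : R, FlagRel1Via DR br s.1 s'.1 u₀ 1) ⊕
           Quot (fun s s' : {F : FlagData R DR // IsFlag2 DR br F} =>
              ∃ u₀ : R, FlagRel2Via DR br s.1 s'.1 u₀ 1) →
           Quot (lcaCohom DR DQ br),
      Function.Bijective G ∧
      (∀ (s : {F : FlagData R DR // IsFlag1 DR br F}) (A : LCAOn R Q DR DQ br),
        IsFC1Of DR DQ br x s.1 A → G (Sum.inl (Quot.mk _ s)) = Quot.mk _ A) ∧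
      (∀ (s : {F : FlagData R DR // IsFlag2 DR br F}) (A : LCAOn R Q DR DQ br),
        IsFC2Of DR DQ br x s.1 A → G (Sum.inr (Quot.mk _ s)) = Quot.mk _ A)) := by
  refine ⟨exists_isFC1Of hbr hx, exists_isFC2Of hbr hx, ?_, ?_⟩
  · exact exists_bijective_quot_lcaOn hbr hx equivalence_lcaEquiv
      (frel := fun F g F' g' => ∃ u β, β ≠ 0 ∧ FlagRelVia DR br F g F' g' u β)
      (lcaEquiv_iff hx) (fun ⟨_, _, _, h⟩ => h.g_eq)
      (fun _ _ => by simp only [flagRel1Via_iff]) fun _ _ => by simp only [flagRel2Via_iff]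
  · exact exists_bijective_quot_lcaOn hbr hx equivalence_lcaCohom
      (frel := fun F g F' g' => ∃ u, FlagRelVia DR br F g F' g' u 1)
      (lcaCohom_iff hx) (fun ⟨_, h⟩ => h.g_eq)
      (fun _ _ => by simp only [flagRel1Via_iff]) fun _ _ => by simp only [flagRel2Via_iff]

/-- For `R = ℂ[∂]V` and `Q = ℂ[∂]x` free of rank one,
`CExtd(E,R) ≅ (F₁(R)/≡₁) ∪ (F₂(R)/≡₂)` and `CExtd'(E,R) ≅ (F₁(R)/≈₁) ∪ (F₂(R)/≈₂)`,
the bijections sending the class of a flag datum of the first (resp. second) kind to the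
class of the Leibniz conformal algebra `FC₁` (resp. `FC₂`) it determines. -/
theorem cextd_classification_rank_one
    {R Q : Type*} [AddCommGroup R] [Module ℂ R] [AddCommGroup Q] [Module ℂ Q]
    (DR : Module.End ℂ R) (DQ : Module.End ℂ Q)
    (br : ℂ → R → R → R) (hLeib : IsLeibnizConformal DR br)
    (ι : Type*) (v : ι → R)
    (hRfree : ∀ a : R, ∃! c : ι →₀ Polynomial ℂ,
      (c.sum fun i p => Polynomial.aeval DR p (v i)) = a)
    (x : Q) (hQfree : ∀ q : Q, ∃! p : Polynomial ℂ, Polynomial.aeval DQ p x = q) :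
    -- each flag datum does determine a Leibniz conformal algebra structure on `E`
    (∀ s : {F : FlagData R DR // IsFlag1 DR br F},
      ∃ A : LCAOn R Q DR DQ br, IsFC1Of DR DQ br x s.1 A) ∧
    (∀ s : {F : FlagData R DR // IsFlag2 DR br F},
      ∃ A : LCAOn R Q DR DQ br, IsFC2Of DR DQ br x s.1 A) ∧
    -- `CExtd(E,R) ≅ (F₁(R)/≡₁) ∪ (F₂(R)/≡₂)`
    (∃ G : Quot (fun s s' : {F : FlagData R DR // IsFlag1 DR br F} =>
              ∃ (u₀ : R) (β : ℂ), β ≠ 0 ∧ FlagRel1Via DR br s.1 s'.1 u₀ β) ⊕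
           Quot (fun s s' : {F : FlagData R DR // IsFlag2 DR br F} =>
              ∃ (u₀ : R) (β : ℂ), β ≠ 0 ∧ FlagRel2Via DR br s.1 s'.1 u₀ β) →
           Quot (lcaEquiv DR DQ br),
      Function.Bijective G ∧
      (∀ (s : {F : FlagData R DR // IsFlag1 DR br F}) (A : LCAOn R Q DR DQ br),
        IsFC1Of DR DQ br x s.1 A → G (Sum.inl (Quot.mk _ s)) = Quot.mk _ A) ∧
      (∀ (s : {F : FlagData R DR // IsFlag2 DR br F}) (A : LCAOn R Q DR DQ br),
        IsFC2Of DR DQ br x s.1 A → G (Sum.inr (Quot.mk _ s)) = Quot.mk _ A)) ∧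
    -- `CExtd'(E,R) ≅ (F₁(R)/≈₁) ∪ (F₂(R)/≈₂)`
    (∃ G : Quot (fun s s' : {F : FlagData R DR // IsFlag1 DR br F} =>
              ∃ u₀ : R, FlagRel1Via DR br s.1 s'.1 u₀ 1) ⊕
           Quot (fun s s' : {F : FlagData R DR // IsFlag2 DR br F} =>
              ∃ u₀ : R, FlagRel2Via DR br s.1 s'.1 u₀ 1) →
           Quot (lcaCohom DR DQ br),
      Function.Bijective G ∧
      (∀ (s : {F : FlagData R DR // IsFlag1 DR br F}) (A : LCAOn R Q DR DQ br),
        IsFC1Of DR DQ br x s.1 A → G (Sum.inl (Quot.mk _ s)) = Quot.mk _ A) ∧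
      (∀ (s : {F : FlagData R DR // IsFlag2 DR br F}) (A : LCAOn R Q DR DQ br),
        IsFC2Of DR DQ br x s.1 A → G (Sum.inr (Quot.mk _ s)) = Quot.mk _ A)) := by
  have hx : IsFreeGenerator DQ x := (Function.bijective_iff_existsUnique _).2 hQfree
  exact cextd_classification_rank_one_general hLeib hx
end
end

section
/- Let R be a Leibniz conformal algebra whose left-center is trivial or whose right-center is trivial. Then for any Leibniz conformal algebra Q, every twisted product R♮_f Q of R and Q is trivial, i.e. f_λ = 0 (so R♮_f Q is the direct sum of R and Q). -/
noncomputable section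

/-! In `R ♮_f Q` the summands `R` and `Q` annihilate each other, and by the Jacobi identity whatever
annihilates two elements (from either side) also annihilates their bracket.  Since
`[(0,x)_λ (0,y)] = (f_λ(x,y), {x_λ y})`, every value of `f` therefore annihilates `R` from both
sides. -/

namespace IsConformalBilin

variable {U V W : Type*} [AddCommGroup U] [Module ℂ U] [AddCommGroup V] [Module ℂ V]
  [AddCommGroup W] [Module ℂ W] {DU : Module.End ℂ U} {DV : Module.End ℂ V}
  {DW : Module.End ℂ W} {f : ℂ → U → V → W}

theorem map_zero_left (hf : IsConformalBilin DU DV DW f) (l : ℂ) (v : V) : f l 0 v = 0 := by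
  simpa using hf.smul_left l 0 0 v

theorem map_zero_right (hf : IsConformalBilin DU DV DW f) (l : ℂ) (u : U) : f l u 0 = 0 := by
  simpa using hf.smul_right l 0 u 0

end IsConformalBilin

namespace IsLeibnizConformal

variable {R : Type*} [AddCommGroup R] [Module ℂ R] {D : Module.End ℂ R} {br : ℂ → R → R → R}

theorem bracket_bracket_left_eq_zero (h : IsLeibnizConformal D br) {a b c : R}
    (hac : ∀ l, br l a c = 0) (hbc : ∀ l, br l b c = 0) (l m : ℂ) :
    br m (br l a b) c = 0 := by
  have jacobi := h.jacobi l (m - l) a b c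
  simpa only [hac, hbc, h.bilin.map_zero_right, add_sub_cancel, add_zero] using jacobi.symm

theorem bracket_bracket_right_eq_zero (h : IsLeibnizConformal D br) {a b c : R}
    (hab : ∀ l, br l a b = 0) (hac : ∀ l, br l a c = 0) (l m : ℂ) :
    br m a (br l b c) = 0 := by
  rw [h.jacobi, hab, hac, h.bilin.map_zero_left, h.bilin.map_zero_right, add_zero]

end IsLeibnizConformal

/-- `a` belongs to the left-center of the `λ`-bracket `br`, given in evaluated form. -/
def IsLeftCentral {R : Type*} [Zero R] (br : ℂ → R → R → R) (a : R) : Prop :=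
  ∀ (l : ℂ) (b : R), br l a b = 0

/-- `a` belongs to the right-center of the `λ`-bracket `br`, given in evaluated form. -/
def IsRightCentral {R : Type*} [Zero R] (br : ℂ → R → R → R) (a : R) : Prop :=
  ∀ (l : ℂ) (b : R), br l b a = 0

section TwistedProduct

variable {R Q : Type*} [AddCommGroup R] [Module ℂ R] [AddCommGroup Q] [Module ℂ Q]
  {DR : Module.End ℂ R} {DQ : Module.End ℂ Q}
  {br : ℂ → R → R → R} {bq : ℂ → Q → Q → Q} {fm : ℂ → Q → Q → R}

/-- The bracket of the twisted product `R ♮_f Q`: the unified product bracket in which the four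
mutual actions of `R` and `Q` vanish, leaving only the cocycle `f = fm`. -/
def twistedBracket (br : ℂ → R → R → R) (fm : ℂ → Q → Q → R) (bq : ℂ → Q → Q → Q) :
    ℂ → R × Q → R × Q → R × Q :=
  unifiedBracket br (fun _ _ _ => 0) (fun _ _ _ => 0) (fun _ _ _ => 0) (fun _ _ _ => 0) fm bq

theorem twistedBracket_apply (l : ℂ) (p q : R × Q) :
    twistedBracket br fm bq l p q = (br l p.1 q.1 + fm l p.2 q.2, bq l p.2 q.2) := by
  simp only [twistedBracket, unifiedBracket, add_zero, zero_add]

theorem twistedBracket_inl_left (hfm : IsConformalBilin DQ DQ DR fm)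
    (hbq : IsConformalBilin DQ DQ DQ bq) (l : ℂ) (a : R) (p : R × Q) :
    twistedBracket br fm bq l (a, 0) p = (br l a p.1, 0) := by
  rw [twistedBracket_apply, hfm.map_zero_left, hbq.map_zero_left, add_zero]

theorem twistedBracket_inl_right (hfm : IsConformalBilin DQ DQ DR fm)
    (hbq : IsConformalBilin DQ DQ DQ bq) (l : ℂ) (p : R × Q) (b : R) :
    twistedBracket br fm bq l p (b, 0) = (br l p.1 b, 0) := by
  rw [twistedBracket_apply, hfm.map_zero_right, hbq.map_zero_right, add_zero]

theorem twistedBracket_inl_inr (hbr : IsConformalBilin DR DR DR br)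
    (hfm : IsConformalBilin DQ DQ DR fm) (hbq : IsConformalBilin DQ DQ DQ bq)
    (l : ℂ) (a : R) (y : Q) : twistedBracket br fm bq l (a, 0) (0, y) = 0 := by
  rw [twistedBracket_inl_left hfm hbq, hbr.map_zero_right, Prod.mk_zero_zero]

theorem twistedBracket_inr_inl (hbr : IsConformalBilin DR DR DR br)
    (hfm : IsConformalBilin DQ DQ DR fm) (hbq : IsConformalBilin DQ DQ DQ bq)
    (l : ℂ) (x : Q) (b : R) : twistedBracket br fm bq l (0, x) (b, 0) = 0 := by
  rw [twistedBracket_inl_right hfm hbq, hbr.map_zero_left, Prod.mk_zero_zero]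

theorem twistedBracket_inr_inr (hbr : IsConformalBilin DR DR DR br) (l : ℂ) (x y : Q) :
    twistedBracket br fm bq l (0, x) (0, y) = (fm l x y, bq l x y) := by
  rw [twistedBracket_apply, hbr.map_zero_left, zero_add]

theorem isLeftCentral_cocycle (hbr : IsConformalBilin DR DR DR br)
    (hfm : IsConformalBilin DQ DQ DR fm) (hbq : IsConformalBilin DQ DQ DQ bq)
    (htwisted : IsLeibnizConformal (LinearMap.prodMap DR DQ) (twistedBracket br fm bq))
    (l : ℂ) (x y : Q) : IsLeftCentral br (fm l x y) := by
  intro m c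
  have bracket_eq_zero :
      twistedBracket br fm bq m (twistedBracket br fm bq l (0, x) (0, y)) (c, 0) = 0 :=
    htwisted.bracket_bracket_left_eq_zero
      (fun k => twistedBracket_inr_inl hbr hfm hbq k x c)
      (fun k => twistedBracket_inr_inl hbr hfm hbq k y c) l m
  rw [twistedBracket_inr_inr hbr, twistedBracket_inl_right hfm hbq] at bracket_eq_zero
  exact congrArg Prod.fst bracket_eq_zero

theorem isRightCentral_cocycle (hbr : IsConformalBilin DR DR DR br)
    (hfm : IsConformalBilin DQ DQ DR fm) (hbq : IsConformalBilin DQ DQ DQ bq)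
    (htwisted : IsLeibnizConformal (LinearMap.prodMap DR DQ) (twistedBracket br fm bq))
    (l : ℂ) (x y : Q) : IsRightCentral br (fm l x y) := by
  intro m c
  have bracket_eq_zero :
      twistedBracket br fm bq m (c, 0) (twistedBracket br fm bq l (0, x) (0, y)) = 0 :=
    htwisted.bracket_bracket_right_eq_zero
      (fun k => twistedBracket_inl_inr hbr hfm hbq k c x)
      (fun k => twistedBracket_inl_inr hbr hfm hbq k c y) l m
  rw [twistedBracket_inr_inr hbr, twistedBracket_inl_left hfm hbq] at bracket_eq_zero
  exact congrArg Prod.fst bracket_eq_zero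

end TwistedProduct

/-- If the Leibniz conformal algebra `R` has trivial left-center or trivial
right-center, then every twisted product `R ♮_f Q` with a Leibniz conformal algebra `Q`
is trivial, i.e. `f = 0`. -/
theorem twisted_product_trivial_of_trivial_center
    {R Q : Type*} [AddCommGroup R] [Module ℂ R] [AddCommGroup Q] [Module ℂ Q]
    (DR : Module.End ℂ R) (DQ : Module.End ℂ Q)
    (br : ℂ → R → R → R) (hLeib : IsLeibnizConformal DR br)
    (hcenter :
      (∀ a : R, (∀ (l : ℂ) (b : R), br l a b = 0) → a = 0) ∨
      (∀ a : R, (∀ (l : ℂ) (b : R), br l b a = 0) → a = 0))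
    (bq : ℂ → Q → Q → Q) (hbq : IsLeibnizConformal DQ bq)
    (fm : ℂ → Q → Q → R) (hfm : IsConformalBilin DQ DQ DR fm)
    (htwisted : IsLeibnizConformal (LinearMap.prodMap DR DQ)
      (unifiedBracket br (fun _ _ _ => 0) (fun _ _ _ => 0) (fun _ _ _ => 0)
        (fun _ _ _ => 0) fm bq)) :
    ∀ (l : ℂ) (x y : Q), fm l x y = 0 := by
  intro l x y
  rcases hcenter with left_center_trivial | right_center_trivial
  · exact left_center_trivial _ (isLeftCentral_cocycle hLeib.bilin hfm hbq.bilin htwisted l x y)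
  · exact right_center_trivial _ (isRightCentral_cocycle hLeib.bilin hfm hbq.bilin htwisted l x y)
end
end

section
/- Let R be a Leibniz conformal algebra, Q a ℂ[∂]-module, and set E = R ⊕ Q (direct sum of ℂ[∂]-modules). Suppose E is a Leibniz conformal algebra such that R is a bi-sided ideal of E (i.e. [R_λ E] ⊆ R[λ] and [E_λ R] ⊆ R[λ]). Then E is isomorphic, via an isomorphism stabilizing R and co-stabilizing Q, to a crossed product R♮^f_{▷,↼} Q. -/
noncomputable section

/-!
A bracket on `R × Q` is determined by its components on the two summands, so a bracket restricting
to `R` is a unified product bracket. When `R` is a bi-sided ideal, the components `⇀` and `◁` into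
`Q` vanish, which leaves the crossed product bracket. The projection onto `Q` is then a surjective
homomorphism, and the Jacobi identity descends along it to `{·_λ·}`.
-/

theorem IsPolyFun.map_s13 {V W : Type*} [AddCommGroup V] [Module ℂ V] [AddCommGroup W] [Module ℂ W]
    {g : ℂ → V} (hg : IsPolyFun g) (p : V →ₗ[ℂ] W) : IsPolyFun (fun l => p (g l)) := by
  obtain ⟨N, c, hc⟩ := hg
  exact ⟨N, fun k => p (c k), fun l => by simp only [hc, map_sum, map_smul]⟩

section Component

variable {U V W U' V' W' : Type*}
  [AddCommGroup U] [Module ℂ U] [AddCommGroup V] [Module ℂ V] [AddCommGroup W] [Module ℂ W]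
  [AddCommGroup U'] [Module ℂ U'] [AddCommGroup V'] [Module ℂ V'] [AddCommGroup W'] [Module ℂ W']

/-- The component of the `λ`-dependent map `f` along linear maps `i` and `j` into its arguments and
`p` out of its values. For the injections and projections of `R × Q` these are the constituents
`↼`, `⇀`, `◁`, `▷`, `f`, `{·_λ·}` of a bracket on `R × Q`. -/
def bracketComponent (i : U →ₗ[ℂ] U') (j : V →ₗ[ℂ] V') (p : W' →ₗ[ℂ] W)
    (f : ℂ → U' → V' → W') : ℂ → U → V → W :=
  fun l u v => p (f l (i u) (j v))

theorem IsConformalBilin.component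
    {DU : Module.End ℂ U} {DV : Module.End ℂ V} {DW : Module.End ℂ W}
    {DU' : Module.End ℂ U'} {DV' : Module.End ℂ V'} {DW' : Module.End ℂ W'}
    {f : ℂ → U' → V' → W'} (hf : IsConformalBilin DU' DV' DW' f)
    {i : U →ₗ[ℂ] U'} {j : V →ₗ[ℂ] V'} {p : W' →ₗ[ℂ] W}
    (hi : Function.Semiconj i DU DU') (hj : Function.Semiconj j DV DV')
    (hp : Function.Semiconj p DW' DW) :
    IsConformalBilin DU DV DW (bracketComponent i j p f) where
  add_left l a a' b := by simp only [bracketComponent, map_add, hf.add_left]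
  smul_left l c a b := by simp only [bracketComponent, map_smul, hf.smul_left]
  add_right l a b b' := by simp only [bracketComponent, map_add, hf.add_right]
  smul_right l c a b := by simp only [bracketComponent, map_smul, hf.smul_right]
  poly a b := (hf.poly (i a) (j b)).map_s13 p
  conf_left l a b := by simp only [bracketComponent, hi.eq, hf.conf_left, map_smul]
  conf_right l a b := by
    simp only [bracketComponent, hj.eq, hf.conf_right, map_add, map_smul, hp.eq]

end Component

section Surjective

variable {E Q : Type*} [AddCommGroup E] [Module ℂ E] [AddCommGroup Q] [Module ℂ Q]
  {DE : Module.End ℂ E} {DQ : Module.End ℂ Q} {π : E →ₗ[ℂ] Q}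
  {brE : ℂ → E → E → E} {bq : ℂ → Q → Q → Q}

theorem IsConformalBilin.of_surjective (hE : IsConformalBilin DE DE DE brE)
    (hsurj : Function.Surjective π) (hD : Function.Semiconj π DE DQ)
    (hbr : ∀ l u v, π (brE l u v) = bq l (π u) (π v)) :
    IsConformalBilin DQ DQ DQ bq where
  add_left l := hsurj.forall₃.2 fun u u' v => by
    simp only [← map_add, ← hbr, hE.add_left]
  smul_left l c := hsurj.forall₂.2 fun u v => by
    simp only [← map_smul, ← hbr, hE.smul_left]
  add_right l := hsurj.forall₃.2 fun u v v' => by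
    simp only [← map_add, ← hbr, hE.add_right]
  smul_right l c := hsurj.forall₂.2 fun u v => by
    simp only [← map_smul, ← hbr, hE.smul_right]
  poly := hsurj.forall₂.2 fun u v => by
    simpa only [hbr] using (hE.poly u v).map_s13 π
  conf_left l := hsurj.forall₂.2 fun u v => by
    simp only [← hD.eq, ← hbr, hE.conf_left, map_smul]
  conf_right l := hsurj.forall₂.2 fun u v => by
    simp only [← hD.eq, ← hbr, hE.conf_right, map_add, map_smul]

theorem IsLeibnizConformal.of_surjective (hE : IsLeibnizConformal DE brE)
    (hsurj : Function.Surjective π) (hD : Function.Semiconj π DE DQ)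
    (hbr : ∀ l u v, π (brE l u v) = bq l (π u) (π v)) :
    IsLeibnizConformal DQ bq where
  bilin := hE.bilin.of_surjective hsurj hD hbr
  jacobi l m := hsurj.forall₃.2 fun a b c => by
    simp only [← hbr, hE.jacobi l m a b c, map_add]

end Surjective

section Product

open LinearMap

variable {R Q : Type*} [AddCommGroup R] [Module ℂ R] [AddCommGroup Q] [Module ℂ Q]

section Derivation

variable (DR : Module.End ℂ R) (DQ : Module.End ℂ Q)

theorem semiconj_inl_prodMap : Function.Semiconj (inl ℂ R Q) DR (prodMap DR DQ) :=
  fun a => by simp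

theorem semiconj_inr_prodMap : Function.Semiconj (inr ℂ R Q) DQ (prodMap DR DQ) :=
  fun x => by simp

theorem semiconj_fst_prodMap : Function.Semiconj (fst ℂ R Q) (prodMap DR DQ) DR :=
  fun _ => rfl

theorem semiconj_snd_prodMap : Function.Semiconj (snd ℂ R Q) (prodMap DR DQ) DQ :=
  fun _ => rfl

end Derivation

/-- The bracket of the crossed product `R ♮^f_{▷,↼} Q`: the unified product bracket with trivial
`⇀` and `◁`. -/
abbrev crossedBracket (br : ℂ → R → R → R) (lh : ℂ → R → Q → R) (rt : ℂ → Q → R → R)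
    (fm : ℂ → Q → Q → R) (bq : ℂ → Q → Q → Q) : ℂ → R × Q → R × Q → R × Q :=
  unifiedBracket br lh (fun _ _ _ => 0) (fun _ _ _ => 0) rt fm bq

theorem IsLeibnizConformal.of_crossedBracket {DR : Module.End ℂ R} {DQ : Module.End ℂ Q}
    {br : ℂ → R → R → R} {lh : ℂ → R → Q → R} {rt : ℂ → Q → R → R}
    {fm : ℂ → Q → Q → R} {bq : ℂ → Q → Q → Q}
    (h : IsLeibnizConformal (prodMap DR DQ) (crossedBracket br lh rt fm bq)) :
    IsLeibnizConformal DQ bq :=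
  h.of_surjective snd_surjective (semiconj_snd_prodMap DR DQ) fun l u v => by
    simp only [crossedBracket, unifiedBracket, snd_apply, zero_add]

variable {br : ℂ → R → R → R} {brE : ℂ → R × Q → R × Q → R × Q}
  {D₁ D₂ D₃ : Module.End ℂ (R × Q)}

theorem unifiedBracket_bracketComponent (hE : IsConformalBilin D₁ D₂ D₃ brE)
    (hsub : ∀ l a b, brE l (a, 0) (b, 0) = (br l a b, 0)) :
    unifiedBracket br
      (bracketComponent (inl ℂ R Q) (inr ℂ R Q) (fst ℂ R Q) brE)
      (bracketComponent (inl ℂ R Q) (inr ℂ R Q) (snd ℂ R Q) brE)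
      (bracketComponent (inr ℂ R Q) (inl ℂ R Q) (snd ℂ R Q) brE)
      (bracketComponent (inr ℂ R Q) (inl ℂ R Q) (fst ℂ R Q) brE)
      (bracketComponent (inr ℂ R Q) (inr ℂ R Q) (fst ℂ R Q) brE)
      (bracketComponent (inr ℂ R Q) (inr ℂ R Q) (snd ℂ R Q) brE) = brE := by
  funext l ⟨a, x⟩ ⟨b, y⟩
  have expand : brE l (a, x) (b, y) = (br l a b, 0) + brE l (a, 0) (0, y)
      + brE l (0, x) (b, 0) + brE l (0, x) (0, y) := by
    rw [← Prod.fst_add_snd (a, x), ← Prod.fst_add_snd (b, y), hE.add_left, hE.add_right,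
      hE.add_right, hsub, ← add_assoc]
  rw [expand]
  ext <;> simp [unifiedBracket, bracketComponent]

theorem crossedBracket_bracketComponent (hE : IsConformalBilin D₁ D₂ D₃ brE)
    (hsub : ∀ l a b, brE l (a, 0) (b, 0) = (br l a b, 0))
    (hidealL : ∀ l a u, (brE l (a, 0) u).2 = 0) (hidealR : ∀ l u a, (brE l u (a, 0)).2 = 0) :
    crossedBracket br
      (bracketComponent (inl ℂ R Q) (inr ℂ R Q) (fst ℂ R Q) brE)
      (bracketComponent (inr ℂ R Q) (inl ℂ R Q) (fst ℂ R Q) brE)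
      (bracketComponent (inr ℂ R Q) (inr ℂ R Q) (fst ℂ R Q) brE)
      (bracketComponent (inr ℂ R Q) (inr ℂ R Q) (snd ℂ R Q) brE) = brE := by
  have rh_eq_zero : bracketComponent (inl ℂ R Q) (inr ℂ R Q) (snd ℂ R Q) brE = fun _ _ _ => 0 := by
    funext l a y
    exact hidealL l a (0, y)
  have lt_eq_zero : bracketComponent (inr ℂ R Q) (inl ℂ R Q) (snd ℂ R Q) brE = fun _ _ _ => 0 := by
    funext l x b
    exact hidealR l (0, x) b
  simpa only [rh_eq_zero, lt_eq_zero] using unifiedBracket_bracketComponent hE hsub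

end Product

/-- If `E = R ⊕ Q` is a Leibniz conformal algebra such that `R` is a
bi-sided ideal of `E`, then `E` is isomorphic (via an isomorphism stabilizing `R` and
co-stabilizing `Q`, here the identity) to a crossed product `R ♮^f_{▷,↼} Q`. -/
theorem isomorphic_to_crossed_product_of_bisided_ideal
    {R Q : Type*} [AddCommGroup R] [Module ℂ R] [AddCommGroup Q] [Module ℂ Q]
    (DR : Module.End ℂ R) (DQ : Module.End ℂ Q)
    (br : ℂ → R → R → R) (hLeib : IsLeibnizConformal DR br)
    (brE : ℂ → R × Q → R × Q → R × Q)
    (hE : IsLeibnizConformal (LinearMap.prodMap DR DQ) brE)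
    (hsub : ∀ (l : ℂ) (a b : R), brE l (a, 0) (b, 0) = (br l a b, 0))
    (hidealL : ∀ (l : ℂ) (a : R) (u : R × Q), (brE l (a, 0) u).2 = 0)
    (hidealR : ∀ (l : ℂ) (u : R × Q) (a : R), (brE l u (a, 0)).2 = 0) :
    ∃ (lh : ℂ → R → Q → R) (rt : ℂ → Q → R → R)
      (fm : ℂ → Q → Q → R) (bq : ℂ → Q → Q → Q),
      IsConformalBilin DR DQ DR lh ∧ IsConformalBilin DQ DR DR rt ∧
      IsConformalBilin DQ DQ DR fm ∧ IsConformalBilin DQ DQ DQ bq ∧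
      IsLeibnizConformal DQ bq ∧
      IsLeibnizConformal (LinearMap.prodMap DR DQ)
        (unifiedBracket br lh (fun _ _ _ => 0) (fun _ _ _ => 0) rt fm bq) ∧
      ∀ (l : ℂ) (u v : R × Q),
        unifiedBracket br lh (fun _ _ _ => 0) (fun _ _ _ => 0) rt fm bq l u v
          = brE l u v := by
  have hcrossed := crossedBracket_bracketComponent hE.bilin hsub hidealL hidealR
  have hLeibCrossed := hcrossed.symm ▸ hE
  have hLeibQ : IsLeibnizConformal DQ (bracketComponent (LinearMap.inr ℂ R Q)
      (LinearMap.inr ℂ R Q) (LinearMap.snd ℂ R Q) brE) := hLeibCrossed.of_crossedBracket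
  have hinl := semiconj_inl_prodMap DR DQ
  have hinr := semiconj_inr_prodMap DR DQ
  have hfst := semiconj_fst_prodMap DR DQ
  exact ⟨_, _, _, _, hE.bilin.component hinl hinr hfst,
    hE.bilin.component hinr hinl hfst, hE.bilin.component hinr hinr hfst,
    hLeibQ.bilin, hLeibQ, hLeibCrossed, fun l u v => congrFun₃ hcrossed l u v⟩
end
end
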